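/- arXiv:1704.05707 — 3 statements merged into one kernel-verified Lean document; each statement's English description precedes it below -/
import Mathlib

section
/- Suppose 𝒟 is a positive integer-valued random variable with E[𝒟^{2+η}] < ∞ for some 0 < η < 1, and let (D_1, …, D_n) = IID(𝒟). Then for any 0 < ε ≤ η/(2(η+2)), the probability P(max{d₁(f_n, f), d₁(f_n^*, f^*)} > n^{-ε}) is O(n^{-ε}) as n → ∞, where f is the density of 𝒟 and f^*(k) = k f(k)/E[𝒟] its size-biased version. -/
open MeasureTheory Filter
open scoped ENNReal NNReal BigOperators

namespace ANNDPaper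

/-- A function is slowly varying if `l (λ x) / l x → 1` as `x → ∞` for every `λ > 0`. -/
def SlowlyVarying (l : ℝ → ℝ) : Prop :=
  ∀ lam : ℝ, 0 < lam → Tendsto (fun x => l (lam * x) / l x) atTop (nhds 1)

/-- A function is eventually monotone if it is monotone on some interval `[K, ∞)`. -/
def EventuallyMonotone (l : ℝ → ℝ) : Prop :=
  ∃ K : ℝ, MonotoneOn l (Set.Ici K) ∨ AntitoneOn l (Set.Ici K)

/-- Cumulative distribution function of a mass function on `ℕ`. -/
noncomputable def cdfOf (f : ℕ → ℝ) (k : ℕ) : ℝ := ∑ j ∈ Finset.range (k + 1), f j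

/-- Kantorovich–Rubinstein distance between two mass functions on `ℕ`,
valued in `ℝ≥0∞`. -/
noncomputable def d1 (f g : ℕ → ℝ) : ℝ≥0∞ :=
  ∑' k : ℕ, ENNReal.ofReal |cdfOf f k - cdfOf g k|

/-- Total variation distance between two mass functions on `ℕ`, valued in `ℝ≥0∞`. -/
noncomputable def dtv (f g : ℕ → ℝ) : ℝ≥0∞ :=
  (∑' k : ℕ, ENNReal.ofReal |f k - g k|) / 2

/-- Mean of a mass function on `ℕ`. -/
noncomputable def meanPMF (f : ℕ → ℝ) : ℝ := ∑' k : ℕ, (k : ℝ) * f k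

/-- Size-biased version `f^*(k) = k f(k) / E[f]` of a mass function on `ℕ`. -/
noncomputable def sizeBiased (f : ℕ → ℝ) (k : ℕ) : ℝ := (k : ℝ) * f k / meanPMF f

/-- `L_n`, the sum of the degrees. -/
def degSum {n : ℕ} (d : Fin n → ℕ) : ℕ := ∑ i, d i

/-- Empirical degree density `f_n(k)`. -/
noncomputable def empDens {n : ℕ} (d : Fin n → ℕ) (k : ℕ) : ℝ :=
  (∑ i, if d i = k then (1 : ℝ) else 0) / (n : ℝ)

/-- Size-biased empirical degree density `f_n^*(k)`. -/
noncomputable def empSB {n : ℕ} (d : Fin n → ℕ) (k : ℕ) : ℝ :=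
  (∑ i, if d i = k then (k : ℝ) else 0) / (degSum d : ℝ)

/-- Size-biased empirical cumulative distribution function `F_n^*(ℓ)`. -/
noncomputable def empSBcdf {n : ℕ} (d : Fin n → ℕ) (l : ℕ) : ℝ :=
  (∑ i, if d i ≤ l then (d i : ℝ) else 0) / (degSum d : ℝ)

/-- Empirical joint degree distribution `h_n(k, ℓ)` of a multigraph with degrees `d`
and edge counts `g` (self-loops counted twice). -/
noncomputable def jointDens {n : ℕ} (d : Fin n → ℕ) (g : Fin n → Fin n → ℕ) (k l : ℕ) : ℝ :=
  (∑ i, ∑ j, if d i = k ∧ d j = l then (g i j : ℝ) else 0) / (degSum d : ℝ)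

/-- Average nearest neighbor degree `Φ_n(k)`. -/
noncomputable def ANND {n : ℕ} (d : Fin n → ℕ) (g : Fin n → Fin n → ℕ) (k : ℕ) : ℝ :=
  if 0 < empDens d k then (∑' l : ℕ, jointDens d g k l * (l : ℝ)) / empSB d k else 0

/-- Average nearest neighbor rank `Θ_n(k)`. -/
noncomputable def ANNR {n : ℕ} (d : Fin n → ℕ) (g : Fin n → Fin n → ℕ) (k : ℕ) : ℝ :=
  if 0 < empDens d k then (∑' l : ℕ, jointDens d g k l * empSBcdf d l) / empSB d k else 0

/-- The degree of node `i` in a multigraph with edge counts `g` (self-loops counted twice). -/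
def degOf {n : ℕ} (g : Fin n → Fin n → ℕ) (i : Fin n) : ℕ := ∑ j, g i j

/-- Erased edge counts: self-loops removed, multiple edges merged. -/
def erase {n : ℕ} (g : Fin n → Fin n → ℕ) (i j : Fin n) : ℕ :=
  if i = j then 0 else min (g i j) 1

/-- Degrees after erasure. -/
def eraseDeg {n : ℕ} (g : Fin n → Fin n → ℕ) (i : Fin n) : ℕ := ∑ j, erase g i j

/-- The stubs (half-edges) attached to the nodes, given a degree sequence `d`. -/
abbrev Stubs {n : ℕ} (d : Fin n → ℕ) : Type := (i : Fin n) × Fin (d i)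

/-- A perfect matching of the stubs: a fixed-point-free involution. -/
def Matching {n : ℕ} (d : Fin n → ℕ) : Type :=
  {σ : Equiv.Perm (Stubs d) // ∀ s, σ s ≠ s ∧ σ (σ s) = s}

instance {n : ℕ} (d : Fin n → ℕ) : MeasurableSpace (Matching d) := ⊤

/-- The uniform probability measure on perfect matchings of the stubs. -/
noncomputable def uniformMatching {n : ℕ} (d : Fin n → ℕ) : Measure (Matching d) :=
  (Nat.card (Matching d) : ℝ≥0∞)⁻¹ • Measure.count

/-- The edge counts `G_{ij}` of the configuration-model multigraph determined by a
matching of the stubs: the number of stubs of `i` matched to stubs of `j`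
(self-loops are automatically counted twice). -/
def cmEdges {n : ℕ} (d : Fin n → ℕ) (σ : Matching d) (i j : Fin n) : ℕ :=
  (Finset.univ.filter (fun s : Fin (d i) => ((σ.1 ⟨i, s⟩).1 = j))).card

/-- Parity correction: add `1` to the last coordinate if the total sum is odd,
making the total even. -/
def parityFix (n : ℕ) (x : Fin n → ℕ) (i : Fin n) : ℕ :=
  if (i : ℕ) = n - 1 ∧ (∑ j, x j) % 2 = 1 then x i + 1 else x i

/-- The law of the degree sequence `IID(𝒟)` of length `n`, where `ν` is the law of `𝒟`:
i.i.d. samples with the last one corrected for parity. -/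
noncomputable def iidLaw (n : ℕ) (ν : Measure ℕ) : Measure (Fin n → ℕ) :=
  Measure.map (parityFix n) (Measure.pi fun _ : Fin n => ν)

/-- The joint law of (degree sequence, edge counts) in the configuration model of size `n`
with degree sequence `IID(𝒟)`, where `ν` is the law of `𝒟`: sample the degrees, then an
independent uniform perfect matching of the stubs. -/
noncomputable def cmLaw (n : ℕ) (ν : Measure ℕ) :
    Measure ((Fin n → ℕ) × (Fin n → Fin n → ℕ)) :=
  (iidLaw n ν).bind fun d => (uniformMatching d).map fun σ => (d, cmEdges d σ)

/-- Tail truncation of a weight. -/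
noncomputable def tr (g : ℕ → ℝ) (k x : ℕ) : ℝ := if k < x then g x else 0

lemma integ_pow (ν : Measure ℕ) [IsProbabilityMeasure ν] (f : ℕ → ℝ)
    (hf : ∀ k, f k = (ν {k}).toReal) (p : ℝ)
    (hmom : Summable fun k : ℕ => (k : ℝ) ^ p * f k) :
    Integrable (fun x : ℕ => (x : ℝ) ^ p) ν := by
  refine ⟨(Measurable.of_discrete).aestronglyMeasurable, ?_⟩
  rw [hasFiniteIntegral_iff_norm, lintegral_countable']
  have : ∀ k : ℕ, ENNReal.ofReal ‖(k : ℝ) ^ p‖ * ν {k} = ENNReal.ofReal ((k : ℝ) ^ p * f k) := by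
    intro k
    rw [Real.norm_of_nonneg (by positivity), ENNReal.ofReal_mul (by positivity), hf,
      ENNReal.ofReal_toReal (measure_ne_top _ _)]
  simp_rw [this]
  rw [← ENNReal.ofReal_tsum_of_nonneg _ hmom]
  · exact ENNReal.ofReal_lt_top
  · intro k; rw [hf]; positivity

lemma l1_le (ν : Measure ℕ) [IsProbabilityMeasure ν] (h : ℕ → ℝ) (hh : MemLp h 2 ν)
    (n : ℕ) (hn : 0 < n) :
    ∫ x : Fin n → ℕ, |(∑ i, h (x i)) / n - ∫ y, h y ∂ν| ∂(Measure.pi fun _ : Fin n => ν)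
      ≤ √((∫ y, h y ^ 2 ∂ν) / n) := by
  set π := Measure.pi fun _ : Fin n => ν
  have hn' : (0 : ℝ) < n := by exact_mod_cast hn
  have hmp : ∀ i : Fin n, MeasurePreserving (Function.eval i) π ν :=
    fun i => measurePreserving_eval (fun _ : Fin n => ν) i
  have hi : ∀ i : Fin n, MemLp (fun x : Fin n → ℕ => h (x i)) 2 π := fun i =>
    hh.comp_measurePreserving (hmp i)
  have hS : MemLp (fun x : Fin n → ℕ => ∑ i, h (x i)) 2 π := memLp_finsetSum _ fun i _ => hi i
  have hY : MemLp (fun x : Fin n → ℕ => (∑ i, h (x i)) / n) 2 π := by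
    simpa [div_eq_inv_mul] using hS.const_mul ((n : ℝ)⁻¹)
  have hYm : MemLp (fun x : Fin n → ℕ => (∑ i, h (x i)) / n - ∫ y, h y ∂ν) 2 π :=
    hY.sub (memLp_const _)
  have hmean : ∫ x : Fin n → ℕ, (∑ i, h (x i)) / n ∂π = ∫ y, h y ∂ν := by
    rw [integral_div, integral_finsetSum _ fun i _ => (hi i).integrable (by norm_num)]
    have : ∀ i : Fin n, ∫ x : Fin n → ℕ, h (x i) ∂π = ∫ y, h y ∂ν := fun i => by
      rw [← (hmp i).map_eq, integral_map (hmp i).measurable.aemeasurable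
        (Measurable.of_discrete).aestronglyMeasurable]
    simp [this]; field_simp
  have hvar : ProbabilityTheory.variance (fun x : Fin n → ℕ => (∑ i, h (x i)) / n) π
      = ProbabilityTheory.variance h ν / n := by
    have e1 : (fun x : Fin n → ℕ => (∑ i, h (x i)) / n)
        = fun x => (n : ℝ)⁻¹ * (∑ i, fun x : Fin n → ℕ => h (x i)) x := by
      ext x; simp [div_eq_inv_mul]
    rw [e1, ProbabilityTheory.variance_const_mul,
      ProbabilityTheory.variance_sum_pi (X := fun _ => h) (fun _ => hh)]
    simp; field_simp
  have hsq : ∫ x : Fin n → ℕ, ((∑ i, h (x i)) / n - ∫ y, h y ∂ν) ^ 2 ∂π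
      ≤ (∫ y, h y ^ 2 ∂ν) / n := by
    rw [ProbabilityTheory.variance_eq_integral hY.aestronglyMeasurable.aemeasurable, hmean] at hvar
    rw [hvar]
    gcongr
    exact ProbabilityTheory.variance_le_expectation_sq hh.aestronglyMeasurable
  refine Real.le_sqrt_of_sq_le (le_trans ?_ hsq)
  have := ProbabilityTheory.variance_nonneg
    (fun x : Fin n → ℕ => |(∑ i, h (x i)) / n - ∫ y, h y ∂ν|) π
  have habs : MemLp (fun x : Fin n → ℕ => |(∑ i, h (x i)) / n - ∫ y, h y ∂ν|) 2 π := hYm.abs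
  rw [ProbabilityTheory.variance_eq_sub habs] at this
  simp only [Pi.pow_apply, sq_abs] at this
  linarith

lemma l1_le' (ν : Measure ℕ) [IsProbabilityMeasure ν] (h : ℕ → ℝ) (hh : Integrable h ν)
    (h0 : ∀ x, 0 ≤ h x) (n : ℕ) (hn : 0 < n) :
    ∫ x : Fin n → ℕ, |(∑ i, h (x i)) / n - ∫ y, h y ∂ν| ∂(Measure.pi fun _ : Fin n => ν)
      ≤ 2 * ∫ y, h y ∂ν := by
  set π := Measure.pi fun _ : Fin n => ν
  have hn' : (0 : ℝ) < n := by exact_mod_cast hn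
  have hmp : ∀ i : Fin n, MeasurePreserving (Function.eval i) π ν :=
    fun i => measurePreserving_eval (fun _ : Fin n => ν) i
  have hi : ∀ i : Fin n, Integrable (fun x : Fin n → ℕ => h (x i)) π := fun i =>
    (hmp i).integrable_comp_of_integrable hh
  have hS : Integrable (fun x : Fin n → ℕ => ∑ i, h (x i)) π := integrable_finsetSum _ fun i _ => hi i
  have hY := hS.div_const (n : ℝ)
  have hmean : ∫ x : Fin n → ℕ, (∑ i, h (x i)) / n ∂π = ∫ y, h y ∂ν := by
    rw [integral_div, integral_finsetSum _ fun i _ => (hi i)]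
    have : ∀ i : Fin n, ∫ x : Fin n → ℕ, h (x i) ∂π = ∫ y, h y ∂ν := fun i => by
      rw [← (hmp i).map_eq, integral_map (hmp i).measurable.aemeasurable
        (Measurable.of_discrete).aestronglyMeasurable]
    simp [this]; field_simp
  have hm0 : 0 ≤ ∫ y, h y ∂ν := integral_nonneg h0
  calc _ ≤ ∫ x : Fin n → ℕ, ((∑ i, h (x i)) / n + ∫ y, h y ∂ν) ∂π := by
        refine integral_mono (hY.sub (integrable_const _)).abs (hY.add (integrable_const _)) ?_
        intro x
        have : 0 ≤ (∑ i, h (x i)) / n := div_nonneg (Finset.sum_nonneg fun i _ => h0 _) hn'.le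
        simp only [abs_le]
        constructor <;> linarith
    _ = _ := by
        rw [integral_add hY (integrable_const _), hmean]; simp; ring

/-- The weighted empirical tail distance. -/
noncomputable def XX (g : ℕ → ℝ) (ν : Measure ℕ) {n : ℕ} (d : Fin n → ℕ) : ℝ≥0∞ :=
  ∑' k : ℕ, ENNReal.ofReal |(∑ i, tr g k (d i)) / n - ∫ y, tr g k y ∂ν|

lemma tr_nonneg {g : ℕ → ℝ} (hg0 : ∀ x, 0 ≤ g x) (k x : ℕ) : 0 ≤ tr g k x := by
  unfold tr; split_ifs; exacts [hg0 x, le_rfl]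

lemma tr_le {g : ℕ → ℝ} (hg1 : ∀ x : ℕ, 1 ≤ x → g x ≤ x) (k x : ℕ) : tr g k x ≤ x := by
  unfold tr; split_ifs
  · exact hg1 x (by omega)
  · positivity

lemma integ_sq {ν : Measure ℕ} [IsProbabilityMeasure ν] {η : ℝ} (hη0 : 0 < η)
    (hM : Integrable (fun x : ℕ => (x : ℝ) ^ (2 + η)) ν) :
    MemLp (fun x : ℕ => (x : ℝ)) 2 ν := by
  rw [memLp_two_iff_integrable_sq (Measurable.of_discrete).aestronglyMeasurable]
  refine hM.mono' (Measurable.of_discrete).aestronglyMeasurable (ae_of_all _ fun x => ?_)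
  rw [Real.norm_of_nonneg (by positivity)]
  rcases Nat.eq_zero_or_pos x with rfl | hx
  · simp; positivity
  · have : (1 : ℝ) ≤ x := by exact_mod_cast hx
    rw [← Real.rpow_natCast]
    exact Real.rpow_le_rpow_of_exponent_le this (by push_cast; linarith)

lemma memLp_tr {ν : Measure ℕ} [IsProbabilityMeasure ν] {g : ℕ → ℝ} (hg0 : ∀ x, 0 ≤ g x)
    (hg1 : ∀ x : ℕ, 1 ≤ x → g x ≤ x) (h2 : MemLp (fun x : ℕ => (x : ℝ)) 2 ν) (k : ℕ) :
    MemLp (tr g k) 2 ν := by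
  refine h2.mono (Measurable.of_discrete).aestronglyMeasurable (ae_of_all _ fun x => ?_)
  rw [Real.norm_of_nonneg (tr_nonneg hg0 k x), Real.norm_of_nonneg (by positivity)]
  exact tr_le hg1 k x

lemma head_bound {ν : Measure ℕ} [IsProbabilityMeasure ν] {g : ℕ → ℝ} (hg0 : ∀ x, 0 ≤ g x)
    (hg1 : ∀ x : ℕ, 1 ≤ x → g x ≤ x) {η : ℝ} (hη0 : 0 < η) (hη1 : η < 1)
    (hM : Integrable (fun x : ℕ => (x : ℝ) ^ (2 + η)) ν) (K n : ℕ) (hK : 0 < K) (hn : 0 < n) :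
    ∑ k ∈ Finset.range K, √((∫ y, tr g k y ^ 2 ∂ν) / n)
      ≤ √((K : ℝ) ^ (2 - η) * (∫ x : ℕ, (x : ℝ) ^ (2 + η) ∂ν) / n) := by
  have h2 := integ_sq hη0 hM
  have hK' : (0 : ℝ) < K := by exact_mod_cast hK
  refine Real.le_sqrt_of_sq_le (sq_sum_le_card_mul_sum_sq.trans ?_)
  have e : ∀ k, √((∫ y, tr g k y ^ 2 ∂ν) / n) ^ 2 = (∫ y, tr g k y ^ 2 ∂ν) / n := fun k =>
    Real.sq_sqrt (div_nonneg (integral_nonneg fun _ => sq_nonneg _) (by positivity))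
  simp_rw [e]
  rw [← Finset.sum_div, Finset.card_range, ← mul_div_assoc]
  gcongr ?_ / _
  rw [← integral_finsetSum _ fun k _ => (memLp_tr hg0 hg1 h2 k).integrable_sq]
  have : (K : ℝ) ^ (2 - η) = K * (K : ℝ) ^ (1 - η) := by
    rw [show 2 - η = 1 + (1 - η) by ring, Real.rpow_add hK', Real.rpow_one]
  rw [this, mul_assoc]
  gcongr
  rw [← integral_const_mul]
  refine integral_mono (integrable_finsetSum _ fun k _ => (memLp_tr hg0 hg1 h2 k).integrable_sq)
    (hM.const_mul _) ?_
  intro x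
  simp only
  rcases Nat.eq_zero_or_pos x with rfl | hx
  · simp [tr]; positivity
  have hx' : (0 : ℝ) < x := by exact_mod_cast hx
  have h1 : ∑ k ∈ Finset.range K, tr g k x ^ 2 ≤ (min x K : ℕ) * (x : ℝ) ^ 2 := by
    calc _ ≤ ∑ k ∈ Finset.range K, if k < x then (x : ℝ) ^ 2 else 0 := by
          refine Finset.sum_le_sum fun k _ => ?_
          unfold tr
          split_ifs
          · exact pow_le_pow_left₀ (hg0 x) (hg1 x hx) 2
          · simp
      _ = _ := by
          rw [← Finset.sum_filter, Finset.sum_const, nsmul_eq_mul]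
          congr 2
          have : (Finset.range K).filter (· < x) = Finset.range (min x K) := by
            ext; simp; omega
          rw [this, Finset.card_range]
  refine h1.trans ?_
  have hm : (0 : ℝ) < (min x K : ℕ) := by exact_mod_cast (lt_min hx hK)
  have : ((min x K : ℕ) : ℝ) ≤ (K : ℝ) ^ (1 - η) * (x : ℝ) ^ η := by
    calc ((min x K : ℕ) : ℝ) = ((min x K : ℕ) : ℝ) ^ (1 - η) * ((min x K : ℕ) : ℝ) ^ η := by
          rw [← Real.rpow_add hm]; simp
      _ ≤ _ := by
          have m1 : ((min x K : ℕ) : ℝ) ≤ K := by exact_mod_cast min_le_right _ _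
          have m2 : ((min x K : ℕ) : ℝ) ≤ x := by exact_mod_cast min_le_left _ _
          exact mul_le_mul (Real.rpow_le_rpow hm.le m1 (by linarith))
            (Real.rpow_le_rpow hm.le m2 hη0.le) (by positivity) (by positivity)
  calc _ ≤ (K : ℝ) ^ (1 - η) * (x : ℝ) ^ η * (x : ℝ) ^ 2 := by gcongr
    _ = _ := by
      rw [Real.rpow_add hx', ← Real.rpow_natCast]; push_cast; ring

lemma tail_bound {ν : Measure ℕ} [IsProbabilityMeasure ν] {g : ℕ → ℝ} (hg0 : ∀ x, 0 ≤ g x)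
    (hg1 : ∀ x : ℕ, 1 ≤ x → g x ≤ x) {η : ℝ} (hη0 : 0 < η)
    (hM : Integrable (fun x : ℕ => (x : ℝ) ^ (2 + η)) ν) (K : ℕ) (hK : 0 < K) :
    ∑' k, ENNReal.ofReal (∫ y, tr g (k + K) y ∂ν)
      ≤ ENNReal.ofReal ((K : ℝ) ^ (-η) * ∫ x : ℕ, (x : ℝ) ^ (2 + η) ∂ν) := by
  have h2 := integ_sq hη0 hM
  have hK' : (0 : ℝ) < K := by exact_mod_cast hK
  have e : ∀ k, ENNReal.ofReal (∫ y, tr g k y ∂ν) = ∫⁻ y, ENNReal.ofReal (tr g k y) ∂ν := fun k =>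
    ofReal_integral_eq_lintegral_ofReal ((memLp_tr hg0 hg1 h2 k).integrable (by norm_num))
      (ae_of_all _ (tr_nonneg hg0 k))
  simp_rw [e]
  rw [← lintegral_tsum fun k => (Measurable.of_discrete).aemeasurable, ← integral_const_mul,
    ofReal_integral_eq_lintegral_ofReal (hM.const_mul _) (ae_of_all _ fun x => by positivity)]
  refine lintegral_mono fun x => ?_
  rw [tsum_eq_sum (s := Finset.range x)]
  swap
  · intro k hk
    simp at hk
    simp [tr, show ¬ (k + K < x) by omega]
  by_cases hx : K < x
  · have hx' : (0 : ℝ) < x := by exact_mod_cast hK.trans hx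
    calc _ ≤ ∑ k ∈ Finset.range x, ENNReal.ofReal (x : ℝ) := by
          gcongr with k
          exact tr_le hg1 _ x
      _ = ENNReal.ofReal (x * x) := by
          rw [Finset.sum_const, Finset.card_range, nsmul_eq_mul, ENNReal.ofReal_mul hx'.le]; simp
      _ ≤ _ := by
          apply ENNReal.ofReal_le_ofReal
          rw [Real.rpow_add hx', Real.rpow_two, Real.rpow_neg hK'.le]
          have : (K : ℝ) ^ η ≤ (x : ℝ) ^ η := by gcongr
          have h3 : 0 < (K : ℝ) ^ η := by positivity
          rw [inv_mul_eq_div, le_div_iff₀ h3, sq]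
          gcongr
  · rw [Finset.sum_eq_zero]
    · exact zero_le
    · intro k _
      simp [tr, show ¬ (k + K < x) by omega]

lemma integ_term {ν : Measure ℕ} [IsProbabilityMeasure ν] {h : ℕ → ℝ} (hh : Integrable h ν)
    (n : ℕ) : Integrable (fun x : Fin n → ℕ =>
      |(∑ i, h (x i)) / n - ∫ y, h y ∂ν|) (Measure.pi fun _ : Fin n => ν) := by
  have hmp : ∀ i : Fin n, MeasurePreserving (Function.eval i) (Measure.pi fun _ : Fin n => ν) ν :=
    fun i => measurePreserving_eval (fun _ : Fin n => ν) i
  have hi : ∀ i : Fin n, Integrable (fun x : Fin n → ℕ => h (x i))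
      (Measure.pi fun _ : Fin n => ν) := fun i =>
    (hmp i).integrable_comp_of_integrable hh
  have hS : Integrable (fun x : Fin n → ℕ => ∑ i, h (x i)) (Measure.pi fun _ : Fin n => ν) :=
    integrable_finsetSum _ fun i _ => hi i
  exact ((hS.div_const _).sub (integrable_const _)).abs

lemma lint_term {ν : Measure ℕ} [IsProbabilityMeasure ν] {h : ℕ → ℝ} (hh : Integrable h ν)
    (n : ℕ) : ∫⁻ x : Fin n → ℕ, ENNReal.ofReal |(∑ i, h (x i)) / n - ∫ y, h y ∂ν|
        ∂(Measure.pi fun _ : Fin n => ν)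
      = ENNReal.ofReal (∫ x : Fin n → ℕ, |(∑ i, h (x i)) / n - ∫ y, h y ∂ν|
        ∂(Measure.pi fun _ : Fin n => ν)) :=
  (ofReal_integral_eq_lintegral_ofReal (integ_term hh n) (ae_of_all _ fun _ => abs_nonneg _)).symm

lemma lint_XX (ν : Measure ℕ) [IsProbabilityMeasure ν] (g : ℕ → ℝ)
    (hg : ∀ k, Integrable (tr g k) ν) (n : ℕ) :
    ∫⁻ x : Fin n → ℕ, XX g ν x ∂(Measure.pi fun _ : Fin n => ν) =
      ∑' k, ENNReal.ofReal (∫ x : Fin n → ℕ, |(∑ i, tr g k (x i)) / n - ∫ y, tr g k y ∂ν|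
        ∂(Measure.pi fun _ : Fin n => ν)) := by
  unfold XX
  rw [lintegral_tsum]
  · exact tsum_congr fun k => lint_term (hg k) n
  · intro k
    exact (Measurable.of_discrete).aemeasurable

lemma core_bound {ν : Measure ℕ} [IsProbabilityMeasure ν] {g : ℕ → ℝ} (hg0 : ∀ x, 0 ≤ g x)
    (hg1 : ∀ x : ℕ, 1 ≤ x → g x ≤ x) {η : ℝ} (hη0 : 0 < η) (hη1 : η < 1)
    (hM : Integrable (fun x : ℕ => (x : ℝ) ^ (2 + η)) ν) (n K : ℕ) (hn : 0 < n) (hK : 0 < K) :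
    ∫⁻ x : Fin n → ℕ, XX g ν x ∂(Measure.pi fun _ : Fin n => ν)
      ≤ ENNReal.ofReal (√((K : ℝ) ^ (2 - η) * (∫ x : ℕ, (x : ℝ) ^ (2 + η) ∂ν) / n)) +
        ENNReal.ofReal (2 * ((K : ℝ) ^ (-η) * ∫ x : ℕ, (x : ℝ) ^ (2 + η) ∂ν)) := by
  have h2 := integ_sq hη0 hM
  have hk : ∀ k, Integrable (tr g k) ν := fun k =>
    (memLp_tr hg0 hg1 h2 k).integrable (by norm_num)
  rw [lint_XX ν g hk n]
  obtain ⟨a, ha⟩ : ∃ a : ℕ → ℝ, ∀ k, a k = ∫ x : Fin n → ℕ,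
    |(∑ i, tr g k (x i)) / n - ∫ y, tr g k y ∂ν| ∂(Measure.pi fun _ : Fin n => ν) :=
    ⟨_, fun _ => rfl⟩
  have ha0 : ∀ k, 0 ≤ a k := fun k => by
    rw [ha]; exact integral_nonneg fun _ => abs_nonneg _
  have ha1 : ∀ k, a k ≤ √((∫ y, tr g k y ^ 2 ∂ν) / n) := fun k => by
    rw [ha]; exact l1_le ν _ (memLp_tr hg0 hg1 h2 k) n hn
  have ha2 : ∀ k, a k ≤ 2 * ∫ y, tr g k y ∂ν := fun k => by
    rw [ha]; exact l1_le' ν _ (hk k) (tr_nonneg hg0 _) n hn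
  simp_rw [← ha]
  clear ha
  have hsplit : ∑ k ∈ Finset.range K, ENNReal.ofReal (a k) + ∑' k, ENNReal.ofReal (a (k + K))
      = ∑' k, ENNReal.ofReal (a k) :=
    Summable.sum_add_tsum_nat_add' (f := fun k => ENNReal.ofReal (a k)) ENNReal.summable
  rw [← hsplit]
  refine add_le_add ?_ ?_
  · rw [← ENNReal.ofReal_sum_of_nonneg fun k _ => ha0 k]
    apply ENNReal.ofReal_le_ofReal
    refine le_trans ?_ (head_bound hg0 hg1 hη0 hη1 hM K n hK hn)
    exact Finset.sum_le_sum fun k _ => ha1 k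
  · rw [ENNReal.ofReal_mul (by norm_num)]
    refine le_trans ?_ (mul_le_mul_right (tail_bound hg0 hg1 hη0 hM K hK) _)
    rw [← ENNReal.tsum_mul_left]
    refine ENNReal.tsum_le_tsum fun k => ?_
    rw [← ENNReal.ofReal_mul (by norm_num)]
    exact ENNReal.ofReal_le_ofReal (ha2 _)

lemma choose_K {η : ℝ} (hη0 : 0 < η) (hη1 : η < 1) {M : ℝ} (hM0 : 0 ≤ M) (n : ℕ) (hn : 0 < n) :
    ∃ K : ℕ, 0 < K ∧ √((K : ℝ) ^ (2 - η) * M / n) + 2 * ((K : ℝ) ^ (-η) * M)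
      ≤ (√(2 ^ (2 - η) * M) + 2 * M) * (n : ℝ) ^ (-(η / (2 + η))) := by
  have hn' : (0 : ℝ) < n := by exact_mod_cast hn
  have hn1 : (1 : ℝ) ≤ n := by exact_mod_cast hn
  obtain ⟨r, hr⟩ : ∃ r : ℝ, r = (n : ℝ) ^ (1 / (2 + η)) := ⟨_, rfl⟩
  have hr1 : 1 ≤ r := hr ▸ Real.one_le_rpow hn1 (by positivity)
  have hr0 : 0 < r := by positivity
  have hrn : r ^ (2 + η) = n := by
    rw [hr, ← Real.rpow_mul hn'.le, one_div_mul_cancel (by positivity), Real.rpow_one]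
  have hrη : r ^ (-η) = (n : ℝ) ^ (-(η / (2 + η))) := by
    rw [hr, ← Real.rpow_mul hn'.le]; congr 1; ring
  rw [← hrη]
  obtain ⟨K, hKdef⟩ : ∃ K : ℕ, K = ⌈r⌉₊ := ⟨_, rfl⟩
  have hK : 0 < K := hKdef ▸ Nat.ceil_pos.2 hr0
  have hKr : r ≤ K := hKdef ▸ Nat.le_ceil r
  have hK2 : (K : ℝ) ≤ 2 * r := by
    have := Nat.ceil_lt_add_one hr0.le
    rw [← hKdef] at this
    linarith
  refine ⟨K, hK, ?_⟩
  rw [add_mul]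
  refine add_le_add ?_ ?_
  · calc √((K : ℝ) ^ (2 - η) * M / n) ≤ √((2 ^ (2 - η) * M) * (r ^ (-η)) ^ 2) := by
          apply Real.sqrt_le_sqrt
          have h3 : (K : ℝ) ^ (2 - η) ≤ 2 ^ (2 - η) * r ^ (2 - η) := by
            rw [← Real.mul_rpow (by norm_num) hr0.le]
            exact Real.rpow_le_rpow (by positivity) hK2 (by linarith)
          have h4 : (r ^ (-η)) ^ 2 = r ^ (2 - η) / n := by
            rw [← hrn, ← Real.rpow_sub hr0, ← Real.rpow_natCast, ← Real.rpow_mul hr0.le]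
            congr 1; push_cast; ring
          rw [h4, ← mul_div_assoc]
          refine div_le_div_of_nonneg_right ?_ hn'.le
          calc _ ≤ 2 ^ (2 - η) * r ^ (2 - η) * M := mul_le_mul_of_nonneg_right h3 hM0
            _ = _ := by ring
      _ = _ := by
          rw [Real.sqrt_mul (by positivity), Real.sqrt_sq (by positivity)]
  · have : (K : ℝ) ^ (-η) ≤ r ^ (-η) :=
      Real.rpow_le_rpow_of_nonpos hr0 hKr (by linarith)
    have := mul_le_mul_of_nonneg_right this hM0
    linarith

lemma main_bound {ν : Measure ℕ} [IsProbabilityMeasure ν] {g : ℕ → ℝ} (hg0 : ∀ x, 0 ≤ g x)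
    (hg1 : ∀ x : ℕ, 1 ≤ x → g x ≤ x) {η : ℝ} (hη0 : 0 < η) (hη1 : η < 1)
    (hM : Integrable (fun x : ℕ => (x : ℝ) ^ (2 + η)) ν) :
    ∃ C : ℝ, 0 ≤ C ∧ ∀ n : ℕ, 0 < n → ∫⁻ x : Fin n → ℕ, XX g ν x ∂(Measure.pi fun _ : Fin n => ν)
      ≤ ENNReal.ofReal (C * (n : ℝ) ^ (-(η / (2 + η)))) := by
  have hM0 : 0 ≤ ∫ x : ℕ, (x : ℝ) ^ (2 + η) ∂ν := integral_nonneg fun x => by positivity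
  refine ⟨√(2 ^ (2 - η) * (∫ x : ℕ, (x : ℝ) ^ (2 + η) ∂ν)) + 2 * (∫ x : ℕ, (x : ℝ) ^ (2 + η) ∂ν),
    by positivity, fun n hn => ?_⟩
  obtain ⟨K, hK, h⟩ := choose_K hη0 hη1 hM0 n hn
  refine (core_bound hg0 hg1 hη0 hη1 hM n K hn hK).trans ?_
  rw [← ENNReal.ofReal_add (by positivity) (by positivity)]
  exact ENNReal.ofReal_le_ofReal h

lemma parity_one {g : ℕ → ℝ} (hg0 : ∀ x, 0 ≤ g x) (hg1 : ∀ x : ℕ, 1 ≤ x → g x ≤ x)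
    (hg2 : ∀ x, |g (x + 1) - g x| ≤ 1) (n x : ℕ) :
    ∑' k, ENNReal.ofReal (|tr g k (x + 1) - tr g k x| / n) ≤ ENNReal.ofReal ((2 * x + 1) / n) := by
  rw [tsum_eq_sum (s := Finset.range (x + 1))]
  swap
  · intro k hk
    simp at hk
    simp [tr, show ¬ (k < x + 1) by omega, show ¬ (k < x) by omega]
  rw [← ENNReal.ofReal_sum_of_nonneg fun k _ => by positivity]
  apply ENNReal.ofReal_le_ofReal
  rw [← Finset.sum_div]
  gcongr
  rw [Finset.sum_range_succ]
  have h1 : ∑ k ∈ Finset.range x, |tr g k (x + 1) - tr g k x| ≤ ∑ k ∈ Finset.range x, (1 : ℝ) := by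
    refine Finset.sum_le_sum fun k hk => ?_
    simp at hk
    simpa [tr, hk, show k < x + 1 by omega] using hg2 x
  have h2 : |tr g x (x + 1) - tr g x x| ≤ x + 1 := by
    simp only [tr, lt_irrefl, if_false, sub_zero, Nat.lt_succ_self, if_true]
    rw [abs_of_nonneg (hg0 _)]
    exact_mod_cast hg1 (x + 1) (by omega)
  simp at h1
  linarith

lemma parity_bound {g : ℕ → ℝ} (hg0 : ∀ x, 0 ≤ g x) (hg1 : ∀ x : ℕ, 1 ≤ x → g x ≤ x)
    (hg2 : ∀ x, |g (x + 1) - g x| ≤ 1) (ν : Measure ℕ) (n : ℕ) (x : Fin n → ℕ) :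
    XX g ν (parityFix n x) ≤ XX g ν x +
      ∑ i : Fin n, if (i : ℕ) = n - 1 then ENNReal.ofReal ((2 * x i + 1) / n) else 0 := by
  have h1 : ∀ i : Fin n, ∑' k, ENNReal.ofReal (|tr g k (parityFix n x i) - tr g k (x i)| / n)
      ≤ if (i : ℕ) = n - 1 then ENNReal.ofReal ((2 * x i + 1) / n) else 0 := by
    intro i
    unfold parityFix
    by_cases hi : (i : ℕ) = n - 1
    · by_cases hp : (∑ j, x j) % 2 = 1
      · simpa [hi, hp] using parity_one hg0 hg1 hg2 n (x i)
      · simp [hi, hp]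
    · simp [hi]
  refine le_trans ?_ (add_le_add_right (Finset.sum_le_sum fun i _ => h1 i) _)
  rw [← Summable.tsum_finsetSum fun i _ => ENNReal.summable]
  unfold XX
  rw [← ENNReal.tsum_add]
  gcongr with k
  rw [← ENNReal.ofReal_sum_of_nonneg fun k _ => by positivity, ← ENNReal.ofReal_add (by positivity)
    (Finset.sum_nonneg fun _ _ => by positivity)]
  apply ENNReal.ofReal_le_ofReal
  rw [← Finset.sum_div]
  have h2 : |(∑ i, tr g k (parityFix n x i)) - ∑ i, tr g k (x i)|
      ≤ ∑ i, |tr g k (parityFix n x i) - tr g k (x i)| := by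
    rw [← Finset.sum_sub_distrib]; exact Finset.abs_sum_le_sum_abs _ _
  have h3 : (∑ i, tr g k (parityFix n x i)) / n - ∫ y, tr g k y ∂ν
      = ((∑ i, tr g k (x i)) / n - ∫ y, tr g k y ∂ν)
        + ((∑ i, tr g k (parityFix n x i)) - ∑ i, tr g k (x i)) / n := by ring
  rw [h3]
  refine (abs_add_le _ _).trans ?_
  rw [abs_div, Nat.abs_cast]
  gcongr

lemma emp_cdf (g : ℕ → ℝ) {n : ℕ} (d : Fin n → ℕ) (k : ℕ) :
    ∑ j ∈ Finset.range (k + 1), ∑ i, (if d i = j then g j else 0)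
      = ∑ i, g (d i) - ∑ i, tr g k (d i) := by
  rw [Finset.sum_comm, ← Finset.sum_sub_distrib]
  refine Finset.sum_congr rfl fun i _ => ?_
  rw [Finset.sum_ite_eq]
  unfold tr
  by_cases h : k < d i
  · simp [h, show ¬ (d i < k + 1) by omega]
  · simp [h, show (d i < k + 1) by omega]

lemma th_cdf (g : ℕ → ℝ) (ν : Measure ℕ) [IsProbabilityMeasure ν] (f : ℕ → ℝ)
    (hf : ∀ k, f k = (ν {k}).toReal) (hg : Integrable g ν) (k : ℕ)
    (ht : Integrable (tr g k) ν) :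
    ∑ j ∈ Finset.range (k + 1), g j * f j = ∫ y, g y ∂ν - ∫ y, tr g k y ∂ν := by
  rw [← integral_sub hg ht]
  have e : ∀ y, g y - tr g k y
      = ∑ j ∈ Finset.range (k + 1), Set.indicator {j} (fun _ => g j) y := by
    intro y
    simp only [Set.indicator_apply, Set.mem_singleton_iff, Finset.sum_ite_eq]
    unfold tr
    by_cases h : k < y
    · simp [h, show ¬ (y < k + 1) by omega]
    · simp [h, show (y < k + 1) by omega]
  simp_rw [e]
  rw [integral_finsetSum _ fun j _ => (integrable_const _).indicator (measurableSet_singleton j)]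
  refine Finset.sum_congr rfl fun j _ => ?_
  rw [integral_indicator_const _ (measurableSet_singleton j), hf, smul_eq_mul, mul_comm]
  rfl

lemma d1_emp (ν : Measure ℕ) [IsProbabilityMeasure ν] (f : ℕ → ℝ)
    (hf : ∀ k, f k = (ν {k}).toReal) {n : ℕ} (hn : 0 < n) (d : Fin n → ℕ) :
    d1 (empDens d) f = XX (fun _ => 1) ν d := by
  unfold d1 XX
  have hn' : (0 : ℝ) < n := by exact_mod_cast hn
  congr 1
  ext k
  have ht : Integrable (tr (fun _ => 1) k) ν := by
    refine (integrable_const (1 : ℝ)).mono' (Measurable.of_discrete).aestronglyMeasurable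
      (ae_of_all _ fun x => ?_)
    unfold tr; split_ifs <;> simp
  have h1 := emp_cdf (fun _ => (1 : ℝ)) d k
  have h2 := th_cdf (fun _ => (1 : ℝ)) ν f hf (integrable_const _) k ht
  simp only [one_mul] at h2
  unfold cdfOf empDens
  rw [← Finset.sum_div, h1, h2, abs_sub_comm]
  congr 2
  simp
  field_simp
  ring

lemma d1_sb (ν : Measure ℕ) [IsProbabilityMeasure ν] (f : ℕ → ℝ)
    (hf : ∀ k, f k = (ν {k}).toReal) (hzero : ν {0} = 0)
    (h2 : Integrable (fun x : ℕ => (x : ℝ) ^ 2) ν)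
    (h1 : Integrable (fun x : ℕ => (x : ℝ)) ν)
    {n : ℕ} (hn : 0 < n) (d : Fin n → ℕ) (hd : ∀ i, 1 ≤ d i) :
    d1 (empSB d) (sizeBiased f)
      ≤ (1 + ENNReal.ofReal (∫ x : ℕ, (x : ℝ) ^ 2 ∂ν)) * XX (fun x => (x : ℝ)) ν d := by
  set g : ℕ → ℝ := fun x => (x : ℝ) with hg
  have hg0 : ∀ x, 0 ≤ g x := fun x => by positivity
  set μ := ∫ x, g x ∂ν with hμ
  have hn' : (0 : ℝ) < n := by exact_mod_cast hn
  have hpos : ∀ᵐ x ∂ν, 1 ≤ x := by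
    rw [ae_iff]
    convert hzero using 2
    ext x; simp
  have hμ1 : 1 ≤ μ := by
    have : ∫ x : ℕ, (1 : ℝ) ∂ν ≤ μ := by
      refine integral_mono_ae (integrable_const _) h1 ?_
      filter_upwards [hpos] with x hx
      show (1 : ℝ) ≤ (x : ℝ)
      exact_mod_cast hx
    simpa using this
  have hmean : meanPMF f = μ := by
    rw [hμ, integral_countable h1]
    unfold meanPMF
    congr 1; ext k
    rw [hf, smul_eq_mul, mul_comm]; rfl
  have ht : ∀ k, Integrable (tr g k) ν := fun k => by
    refine h1.mono' (Measurable.of_discrete).aestronglyMeasurable (ae_of_all _ fun x => ?_)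
    unfold tr; split_ifs <;> simp [hg]
  set L : ℝ := (degSum d : ℝ) with hL
  have hLsum : ∑ i, g (d i) = L := by simp [hL, degSum, hg]
  have hLn : (n : ℝ) ≤ L := by
    rw [← hLsum]
    calc (n : ℝ) = ∑ i : Fin n, (1 : ℝ) := by simp
      _ ≤ _ := Finset.sum_le_sum fun i _ => by simpa [hg] using hd i
  have hL0 : 0 < L := hn'.trans_le hLn
  have hZ : ENNReal.ofReal |L / n - μ| ≤ XX g ν d := by
    refine le_trans (le_of_eq ?_) (ENNReal.le_tsum 0)
    have : ∀ x, tr g 0 x = g x := by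
      intro x
      rcases Nat.eq_zero_or_pos x with rfl | hx
      · simp [tr, hg]
      · simp [tr, hx]
    simp_rw [this, hLsum]
    rfl
  have hT : ∑' k, ENNReal.ofReal (∫ y, tr g k y ∂ν) ≤ ENNReal.ofReal (∫ x : ℕ, (x : ℝ) ^ 2 ∂ν) := by
    have e : ∀ k, ENNReal.ofReal (∫ y, tr g k y ∂ν) = ∫⁻ y, ENNReal.ofReal (tr g k y) ∂ν := fun k =>
      ofReal_integral_eq_lintegral_ofReal (ht k) (ae_of_all _ (tr_nonneg hg0 k))
    simp_rw [e]
    rw [← lintegral_tsum fun k => (Measurable.of_discrete).aemeasurable,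
      ofReal_integral_eq_lintegral_ofReal h2 (ae_of_all _ fun x => by positivity)]
    refine lintegral_mono fun x => ?_
    rw [tsum_eq_sum (s := Finset.range x)]
    swap
    · intro k hk
      simp at hk
      simp [tr, show ¬ (k < x) by omega]
    rw [← ENNReal.ofReal_sum_of_nonneg fun k _ => tr_nonneg hg0 k x]
    apply ENNReal.ofReal_le_ofReal
    calc _ ≤ ∑ k ∈ Finset.range x, (x : ℝ) := by
          refine Finset.sum_le_sum fun k _ => ?_
          unfold tr; split_ifs <;> simp [hg]
      _ = _ := by simp [sq]
  have hk : ∀ k, ENNReal.ofReal |cdfOf (empSB d) k - cdfOf (sizeBiased f) k|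
      ≤ ENNReal.ofReal |(∑ i, tr g k (d i)) / n - ∫ y, tr g k y ∂ν|
        + ENNReal.ofReal (∫ y, tr g k y ∂ν) * ENNReal.ofReal |L / n - μ| := by
    intro k
    have c1 : cdfOf (empSB d) k = 1 - (∑ i, tr g k (d i)) / L := by
      have := emp_cdf g d k
      unfold cdfOf empSB
      rw [← Finset.sum_div, this, hLsum, sub_div, div_self hL0.ne']
    have c2 : cdfOf (sizeBiased f) k = 1 - (∫ y, tr g k y ∂ν) / μ := by
      have := th_cdf g ν f hf h1 k (ht k)
      unfold cdfOf sizeBiased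
      rw [← Finset.sum_div, this, hmean, sub_div, div_self (by positivity)]
    set T := ∑ i, tr g k (d i)
    set s := ∫ y, tr g k y ∂ν
    have hs : 0 ≤ s := integral_nonneg (tr_nonneg hg0 k)
    rw [← ENNReal.ofReal_mul hs, ← ENNReal.ofReal_add (by positivity) (by positivity)]
    apply ENNReal.ofReal_le_ofReal
    have e : cdfOf (empSB d) k - cdfOf (sizeBiased f) k
        = (n / L) * (-(T / n - s) + s * (L / n - μ) / μ) := by
      rw [c1, c2]; field_simp; ring
    rw [e, abs_mul, abs_of_pos (div_pos hn' hL0)]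
    have q1 : (n : ℝ) / L ≤ 1 := (div_le_one hL0).2 hLn
    have q2 : |-(T / n - s) + s * (L / n - μ) / μ| ≤ |T / n - s| + s * |L / n - μ| := by
      refine (abs_add_le _ _).trans ?_
      rw [abs_neg, abs_div, abs_mul, abs_of_nonneg hs, abs_of_pos (by linarith : 0 < μ)]
      gcongr
      exact div_le_self (by positivity) hμ1
    calc _ ≤ 1 * |-(T / n - s) + s * (L / n - μ) / μ| := by gcongr
      _ ≤ _ := by rw [one_mul]; exact q2
  calc d1 (empSB d) (sizeBiased f) ≤ ∑' k, (ENNReal.ofReal |(∑ i, tr g k (d i)) / n - ∫ y, tr g k y ∂ν|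
        + ENNReal.ofReal (∫ y, tr g k y ∂ν) * ENNReal.ofReal |L / n - μ|) := ENNReal.tsum_le_tsum hk
    _ = XX g ν d + (∑' k, ENNReal.ofReal (∫ y, tr g k y ∂ν)) * ENNReal.ofReal |L / n - μ| := by
        rw [ENNReal.tsum_add, ENNReal.tsum_mul_right]; rfl
    _ ≤ _ := by
        rw [add_mul, one_mul]
        gcongr

lemma lint_W (ν : Measure ℕ) [IsProbabilityMeasure ν] (h1 : Integrable (fun x : ℕ => (x : ℝ)) ν)
    (n : ℕ) (hn : 0 < n) :
    ∫⁻ x : Fin n → ℕ, (∑ i : Fin n,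
        if (i : ℕ) = n - 1 then ENNReal.ofReal ((2 * x i + 1) / n) else 0)
        ∂(Measure.pi fun _ : Fin n => ν)
      = ENNReal.ofReal ((2 * (∫ x : ℕ, (x : ℝ) ∂ν) + 1) / n) := by
  have hsum : ∀ x : Fin n → ℕ, (∑ i : Fin n,
        if (i : ℕ) = n - 1 then ENNReal.ofReal ((2 * x i + 1) / n) else 0)
        = ENNReal.ofReal ((2 * x ⟨n - 1, by omega⟩ + 1) / n) := by
    intro x
    rw [Finset.sum_eq_single ⟨n - 1, by omega⟩]
    · simp
    · intro i _ hi
      have : (i : ℕ) ≠ n - 1 := fun h => hi (Fin.ext h)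
      simp [this]
    · simp
  simp_rw [hsum]
  have hmp : MeasurePreserving (Function.eval (⟨n - 1, by omega⟩ : Fin n))
      (Measure.pi fun _ : Fin n => ν) ν := measurePreserving_eval (fun _ : Fin n => ν) _
  have h3 := hmp.lintegral_comp (f := fun y : ℕ => ENNReal.ofReal ((2 * y + 1) / n))
    Measurable.of_discrete
  have h4 : Integrable (fun y : ℕ => (2 * (y : ℝ) + 1) / n) ν :=
    ((h1.const_mul 2).add (integrable_const _)).div_const _
  refine h3.trans ?_
  rw [← ofReal_integral_eq_lintegral_ofReal h4 (ae_of_all _ fun x => by positivity),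
    integral_div, integral_add (h1.const_mul 2) (integrable_const _), integral_const_mul]
  simp

/-- If `E[𝒟^{2+η}] < ∞` for some `0 < η < 1` and the degree sequence is
`IID(𝒟)`, then for any `0 < ε ≤ η/(2(η+2))`,
`P(max{d₁(f_n, f), d₁(f_n^*, f^*)} > n^{-ε}) = O(n^{-ε})`. -/
theorem stmt3 (ν : Measure ℕ) [IsProbabilityMeasure ν] (f : ℕ → ℝ)
    (hf : ∀ k, f k = (ν {k}).toReal) (hzero : ν {0} = 0)
    (η : ℝ) (hη0 : 0 < η) (hη1 : η < 1)
    (hmom : Summable fun k : ℕ => (k : ℝ) ^ (2 + η) * f k)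
    (ε : ℝ) (hε0 : 0 < ε) (hε : ε ≤ η / (2 * (η + 2))) :
    (fun n : ℕ =>
        ((iidLaw n ν) {d : Fin n → ℕ |
            ENNReal.ofReal ((n : ℝ) ^ (-ε)) <
              max (d1 (empDens d) f) (d1 (empSB d) (sizeBiased f))}).toReal)
      =O[atTop] fun n : ℕ => (n : ℝ) ^ (-ε) := by
  have hM := integ_pow ν f hf (2 + η) hmom
  have h2L := integ_sq hη0 hM
  have h1 : Integrable (fun x : ℕ => (x : ℝ)) ν := h2L.integrable (by norm_num)
  have h2 : Integrable (fun x : ℕ => (x : ℝ) ^ 2) ν := h2L.integrable_sq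
  have a0 : ∀ x : ℕ, (0 : ℝ) ≤ (fun _ : ℕ => (1 : ℝ)) x := fun x => zero_le_one
  have a1 : ∀ x : ℕ, 1 ≤ x → (fun _ : ℕ => (1 : ℝ)) x ≤ x := fun x hx => by
    simpa using hx
  have a2 : ∀ x : ℕ, |(fun _ : ℕ => (1 : ℝ)) (x + 1) - (fun _ : ℕ => (1 : ℝ)) x| ≤ 1 := fun x => by
    simp
  have b0 : ∀ x : ℕ, (0 : ℝ) ≤ (fun x : ℕ => (x : ℝ)) x := fun x => Nat.cast_nonneg x
  have b1 : ∀ x : ℕ, 1 ≤ x → (fun x : ℕ => (x : ℝ)) x ≤ x := fun x hx => le_rfl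
  have b2 : ∀ x : ℕ, |(fun x : ℕ => (x : ℝ)) (x + 1) - (fun x : ℕ => (x : ℝ)) x| ≤ 1 := fun x => by
    simp
  obtain ⟨C1, hC1, hX1⟩ := main_bound a0 a1 hη0 hη1 hM
  obtain ⟨C2, hC2, hX2⟩ := main_bound b0 b1 hη0 hη1 hM
  obtain ⟨A, hA⟩ : ∃ A : ℝ, A = 1 + ∫ x : ℕ, (x : ℝ) ^ 2 ∂ν := ⟨_, rfl⟩
  have hm2 : 0 ≤ ∫ x : ℕ, (x : ℝ) ^ 2 ∂ν := integral_nonneg fun x => by positivity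
  have hA0 : 0 ≤ A := by rw [hA]; positivity
  have hAe : 1 + ENNReal.ofReal (∫ x : ℕ, (x : ℝ) ^ 2 ∂ν) = ENNReal.ofReal A := by
    rw [hA, ENNReal.ofReal_add zero_le_one hm2]; simp
  obtain ⟨B, hB⟩ : ∃ B : ℝ, B = 2 * (∫ x : ℕ, (x : ℝ) ∂ν) + 1 := ⟨_, rfl⟩
  have hB0 : 0 ≤ B := by
    have : 0 ≤ ∫ x : ℕ, (x : ℝ) ∂ν := integral_nonneg fun x => by positivity
    rw [hB]; positivity
  have hC0 : 0 ≤ (C1 + B) + A * (C2 + B) := by positivity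
  refine Asymptotics.IsBigO.of_bound ((C1 + B) + A * (C2 + B)) ?_
  filter_upwards [eventually_gt_atTop 0] with n hn
  have hn' : (0 : ℝ) < n := by exact_mod_cast hn
  have hn1 : (1 : ℝ) ≤ n := by exact_mod_cast hn
  rw [Real.norm_of_nonneg ENNReal.toReal_nonneg, Real.norm_of_nonneg (by positivity)]
  obtain ⟨W, hW⟩ : ∃ W : (Fin n → ℕ) → ℝ≥0∞, W = fun x => ∑ i : Fin n,
        if (i : ℕ) = n - 1 then ENNReal.ofReal ((2 * x i + 1) / n) else 0 := ⟨_, rfl⟩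
  have hpar1 : ∀ x : Fin n → ℕ, XX (fun _ => 1) ν (parityFix n x) ≤ XX (fun _ => 1) ν x + W x :=
    fun x => by rw [hW]; exact parity_bound a0 a1 a2 ν n x
  have hpar2 : ∀ x : Fin n → ℕ, XX (fun x : ℕ => (x : ℝ)) ν (parityFix n x)
      ≤ XX (fun x : ℕ => (x : ℝ)) ν x + W x :=
    fun x => by rw [hW]; exact parity_bound b0 b1 b2 ν n x
  have hWi : ∫⁻ x, W x ∂(Measure.pi fun _ : Fin n => ν)
      ≤ ENNReal.ofReal (B * (n : ℝ) ^ (-(η / (2 + η)))) := by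
    rw [hW, lint_W ν h1 n hn, ← hB]
    apply ENNReal.ofReal_le_ofReal
    rw [div_eq_mul_inv, ← Real.rpow_neg_one]
    refine mul_le_mul_of_nonneg_left (Real.rpow_le_rpow_of_exponent_le hn1 ?_) hB0
    rw [neg_le_neg_iff, div_le_one (by positivity)]
    linarith
  obtain ⟨Z, hZ⟩ : ∃ Z : (Fin n → ℕ) → ℝ≥0∞, Z = fun x => (XX (fun _ => 1) ν x + W x)
      + ENNReal.ofReal A * (XX (fun x : ℕ => (x : ℝ)) ν x + W x) := ⟨_, rfl⟩
  have hZi : ∫⁻ x, Z x ∂(Measure.pi fun _ : Fin n => ν)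
      ≤ ENNReal.ofReal (((C1 + B) + A * (C2 + B)) * (n : ℝ) ^ (-(η / (2 + η)))) := by
    rw [hZ, lintegral_add_left Measurable.of_discrete, lintegral_add_left Measurable.of_discrete,
      lintegral_const_mul _ Measurable.of_discrete, lintegral_add_left Measurable.of_discrete]
    have e : ((C1 + B) + A * (C2 + B)) * (n : ℝ) ^ (-(η / (2 + η)))
      = (C1 * (n : ℝ) ^ (-(η / (2 + η))) + B * (n : ℝ) ^ (-(η / (2 + η))))
        + A * (C2 * (n : ℝ) ^ (-(η / (2 + η))) + B * (n : ℝ) ^ (-(η / (2 + η)))) := by ring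
    rw [e, ENNReal.ofReal_add (by positivity) (by positivity),
      ENNReal.ofReal_add (by positivity) (by positivity), ENNReal.ofReal_mul hA0,
      ENNReal.ofReal_add (by positivity) (by positivity)]
    exact add_le_add (add_le_add (hX1 n hn) hWi)
      (mul_le_mul_right (add_le_add (hX2 n hn) hWi) _)
  have hpos : ∀ᵐ x ∂ν, 1 ≤ x := by
    rw [ae_iff]
    convert hzero using 2
    ext x; simp
  have hae : ∀ᵐ x ∂(Measure.pi fun _ : Fin n => ν), ∀ i, 1 ≤ x i := by
    rw [ae_all_iff]
    intro i
    exact (measurePreserving_eval (fun _ : Fin n => ν) i).quasiMeasurePreserving.ae hpos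
  have hle : (iidLaw n ν) {d : Fin n → ℕ | ENNReal.ofReal ((n : ℝ) ^ (-ε)) <
              max (d1 (empDens d) f) (d1 (empSB d) (sizeBiased f))}
      ≤ (Measure.pi fun _ : Fin n => ν) {x | ENNReal.ofReal ((n : ℝ) ^ (-ε)) ≤ Z x} := by
    unfold iidLaw
    rw [Measure.map_apply Measurable.of_discrete (MeasurableSet.of_discrete)]
    apply measure_mono_ae
    filter_upwards [hae] with x hx hx2
    refine le_trans (le_of_lt hx2) ?_
    have hp : ∀ i, 1 ≤ parityFix n x i := fun i => by
      unfold parityFix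
      have := hx i
      split_ifs <;> omega
    have g1 : d1 (empDens (parityFix n x)) f ≤ XX (fun _ => 1) ν x + W x := by
      rw [d1_emp ν f hf hn]; exact hpar1 x
    have g2 : d1 (empSB (parityFix n x)) (sizeBiased f)
        ≤ ENNReal.ofReal A * (XX (fun x : ℕ => (x : ℝ)) ν x + W x) := by
      refine (d1_sb ν f hf hzero h2 h1 hn _ hp).trans ?_
      rw [hAe]
      exact mul_le_mul_right (hpar2 x) _
    rw [hZ]
    exact max_le (g1.trans le_self_add) (g2.trans le_add_self)
  have hmk := (mul_meas_ge_le_lintegral (μ := Measure.pi fun _ : Fin n => ν) (f := Z)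
    Measurable.of_discrete (ENNReal.ofReal ((n : ℝ) ^ (-ε)))).trans hZi
  have hfin := (mul_le_mul_right hle (ENNReal.ofReal ((n : ℝ) ^ (-ε)))).trans hmk
  have hreal := ENNReal.toReal_mono ENNReal.ofReal_ne_top hfin
  rw [ENNReal.toReal_mul, ENNReal.toReal_ofReal (by positivity),
    ENNReal.toReal_ofReal (by positivity)] at hreal
  have hpow : (n : ℝ) ^ (-(η / (2 + η))) ≤ (n : ℝ) ^ (-ε) * (n : ℝ) ^ (-ε) := by
    rw [← Real.rpow_add hn']
    apply Real.rpow_le_rpow_of_exponent_le hn1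
    have : η / (2 + η) = 2 * (η / (2 * (η + 2))) := by field_simp; ring
    linarith
  have hne : 0 < (n : ℝ) ^ (-ε) := by positivity
  have hfinal := hreal.trans (mul_le_mul_of_nonneg_left hpow hC0)
  refine le_of_mul_le_mul_left (hfinal.trans (le_of_eq ?_)) hne
  ring

end ANNDPaper
end

section
/- Let {G_n}_{n≥1} be a sequence of random multigraphs, G_n on n nodes with degree sequence (D_1, …, D_n), satisfying: (i) there exist a probability mass function f on the nonnegative integers with size-biased version f^*(k) = k f(k)/(Σ_ℓ ℓ f(ℓ)) and constants α, ε > 0 such that P(max{d₁(f_n, f), d₁(f_n^*, f^*)} > n^{-ε}) = O(n^{-α}); (ii) there exist a joint probability mass function h(k, ℓ) on the positive integers and κ > 0 such that P(Σ_{k,ℓ≥1} |h_n(k,ℓ) − h(k,ℓ)| 1{f_n(k) > 0} > n^{-κ}) → 0 as n → ∞; (iii) Σ_k k^{2+η} f(k) < ∞ for some 0 < η < 1. Define Φ(k) = 1{f^*(k) > 0} (Σ_{ℓ≥1} h(k,ℓ) ℓ)/f^*(k). Then for each fixed k with f(k) > 0 and each 0 < δ < min{ε, κη/(η+1)}, lim_{n→∞}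 P(|Φ_n(k) − Φ(k)| ≤ n^{-δ}) = 1. -/
open MeasureTheory Filter
open scoped ENNReal NNReal BigOperators

namespace ANNDPaper

lemma ofReal_one_sub_cdf (p : ℕ → ℝ) (hp0 : ∀ k, 0 ≤ p k) (hp1 : HasSum p 1) (m : ℕ) :
    ENNReal.ofReal (1 - cdfOf p m) = ∑' l, if m < l then ENNReal.ofReal (p l) else 0 := by
  have h1 : HasSum (fun l => if l ∈ Finset.range (m+1) then p l else 0) (cdfOf p m) := by
    have := hasSum_sum_of_ne_finset_zero (L := SummationFilter.unconditional ℕ) (f := fun l => if l ∈ Finset.range (m+1) then p l else 0)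
      (s := Finset.range (m+1)) (fun b hb => if_neg hb)
    convert this using 1
    unfold cdfOf
    exact Finset.sum_congr rfl (fun x hx => (if_pos hx).symm)
  have h2 := hp1.sub h1
  have h3 : (fun l => p l - if l ∈ Finset.range (m+1) then p l else 0)
      = fun l => if m < l then p l else 0 := by
    funext l
    by_cases hl : m < l
    · have : l ∉ Finset.range (m+1) := by simp; omega
      simp only [if_neg this, if_pos hl, sub_zero]
    · have : l ∈ Finset.range (m+1) := by simp; omega
      simp only [if_pos this, if_neg hl, sub_self]
  rw [h3] at h2
  rw [← h2.tsum_eq, ENNReal.ofReal_tsum_of_nonneg _ h2.summable]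
  · refine tsum_congr fun l => ?_
    split_ifs <;> simp
  · intro l
    split_ifs
    · exact hp0 l
    · exact le_rfl

lemma tail_eq (p : ℕ → ℝ) (hp0 : ∀ k, 0 ≤ p k) (hp1 : HasSum p 1) (a : ℕ) :
    ∑' l, ENNReal.ofReal (p l) * ((l - a : ℕ) : ℝ≥0∞)
      = ∑' m, if a ≤ m then ENNReal.ofReal (1 - cdfOf p m) else 0 := by
  have h1 : ∀ m, (if a ≤ m then ENNReal.ofReal (1 - cdfOf p m) else 0)
      = ∑' l, if m ∈ Finset.Ico a l then ENNReal.ofReal (p l) else 0 := by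
    intro m
    rw [ofReal_one_sub_cdf p hp0 hp1]
    by_cases ham : a ≤ m
    · rw [if_pos ham]
      refine tsum_congr fun l => ?_
      simp [ham]
    · simp [ham]
  simp_rw [h1]
  rw [ENNReal.tsum_comm]
  refine tsum_congr fun l => ?_
  rw [tsum_eq_sum (s := Finset.Ico a l) (fun b hb => if_neg hb)]
  rw [Finset.sum_congr rfl (fun x hx => if_pos hx)]
  simp [mul_comm]

lemma tail_le (p q : ℕ → ℝ) (hp0 : ∀ k, 0 ≤ p k) (hp1 : HasSum p 1)
    (hq0 : ∀ k, 0 ≤ q k) (hq1 : HasSum q 1) (a : ℕ) :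
    ∑' l, ENNReal.ofReal (p l) * ((l - a : ℕ) : ℝ≥0∞)
      ≤ ∑' l, ENNReal.ofReal (q l) * ((l - a : ℕ) : ℝ≥0∞) + d1 p q := by
  rw [tail_eq p hp0 hp1, tail_eq q hq0 hq1, d1, ← ENNReal.tsum_add]
  refine ENNReal.tsum_le_tsum fun m => ?_
  split_ifs
  · refine le_trans (ENNReal.ofReal_le_ofReal ?_) ENNReal.ofReal_add_le
    have := neg_abs_le (cdfOf p m - cdfOf q m)
    linarith
  · simp

lemma cdf_diff_le (p q : ℕ → ℝ) (x : ℝ) (hx : 0 ≤ x) (hd : d1 p q ≤ ENNReal.ofReal x) (m : ℕ) :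
    |cdfOf p m - cdfOf q m| ≤ x := by
  have := (ENNReal.le_tsum (f := fun k => ENNReal.ofReal |cdfOf p k - cdfOf q k|) m).trans hd
  exact (ENNReal.ofReal_le_ofReal_iff hx).1 this

lemma diff_le (p q : ℕ → ℝ) (x : ℝ) (hx : 0 ≤ x) (hd : d1 p q ≤ ENNReal.ofReal x) (m : ℕ) :
    |p m - q m| ≤ 2 * x := by
  cases m with
  | zero =>
    have := cdf_diff_le p q x hx hd 0
    simp [cdfOf] at this
    linarith
  | succ m =>
    have h1 := cdf_diff_le p q x hx hd m
    have h2 := cdf_diff_le p q x hx hd (m+1)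
    have h3 : cdfOf p (m+1) = cdfOf p m + p (m+1) := by simp [cdfOf, Finset.sum_range_succ]
    have h4 : cdfOf q (m+1) = cdfOf q m + q (m+1) := by simp [cdfOf, Finset.sum_range_succ]
    rw [h3, h4] at h2
    rw [abs_le] at *
    constructor <;> linarith [h1.1, h1.2, h2.1, h2.2]

lemma real_tail (q : ℕ → ℝ) (hq0 : ∀ k, 0 ≤ q k) (η : ℝ) (hη0 : 0 < η)
    (hM : Summable fun l : ℕ => (l : ℝ) ^ (1 + η) * q l) (a : ℕ) (ha : 1 ≤ a) :
    Summable (fun l : ℕ => q l * ((l - a : ℕ) : ℝ)) ∧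
    ∑' l : ℕ, q l * ((l - a : ℕ) : ℝ) ≤ (a : ℝ) ^ (-η) * ∑' l : ℕ, (l : ℝ) ^ (1 + η) * q l := by
  have ha0 : (0 : ℝ) < a := by exact_mod_cast ha
  have hle : ∀ l : ℕ, q l * ((l - a : ℕ) : ℝ) ≤ (a : ℝ) ^ (-η) * ((l : ℝ) ^ (1 + η) * q l) := by
    intro l
    by_cases hl : a ≤ l
    · have hla : (a : ℝ) ≤ l := by exact_mod_cast hl
      have hl0 : (0 : ℝ) < l := lt_of_lt_of_le ha0 hla
      have h1 : ((l - a : ℕ) : ℝ) ≤ l := by exact_mod_cast Nat.sub_le l a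
      have h2 : (l : ℝ) ≤ (a : ℝ) ^ (-η) * (l : ℝ) ^ (1 + η) := by
        rw [Real.rpow_neg ha0.le, Real.rpow_add hl0, Real.rpow_one]
        have h3 : (a : ℝ) ^ η ≤ (l : ℝ) ^ η := Real.rpow_le_rpow ha0.le hla hη0.le
        have h4 : 0 < (a : ℝ) ^ η := Real.rpow_pos_of_pos ha0 _
        rw [inv_mul_eq_div, le_div_iff₀ h4]
        exact mul_le_mul_of_nonneg_left h3 hl0.le
      calc q l * ((l - a : ℕ) : ℝ) ≤ q l * ((a : ℝ) ^ (-η) * (l : ℝ) ^ (1 + η)) :=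
            mul_le_mul_of_nonneg_left (h1.trans h2) (hq0 l)
        _ = _ := by ring
    · have : l - a = 0 := by omega
      rw [this]
      have := hq0 l
      simp only [Nat.cast_zero, mul_zero]
      positivity
  have hs : Summable (fun l : ℕ => q l * ((l - a : ℕ) : ℝ)) :=
    Summable.of_nonneg_of_le (fun l => mul_nonneg (hq0 l) (Nat.cast_nonneg _)) hle (hM.mul_left _)
  refine ⟨hs, ?_⟩
  rw [← tsum_mul_left]
  exact hs.tsum_le_tsum hle (hM.mul_left _)

lemma det_bound (p q u v : ℕ → ℝ) (hp0 : ∀ k, 0 ≤ p k) (hp1 : HasSum p 1)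
    (hq0 : ∀ k, 0 ≤ q k) (hq1 : HasSum q 1)
    (hu0 : ∀ l, 0 ≤ u l) (hup : ∀ l, u l ≤ p l) (hv0 : ∀ l, 0 ≤ v l) (hvq : ∀ l, v l ≤ q l)
    (hus : Summable fun l : ℕ => u l * (l : ℝ))
    (x y : ℝ) (hx : 0 ≤ x) (hd : d1 p q ≤ ENNReal.ofReal x)
    (huv : ∑' l, |u l - v l| ≤ y)
    (η : ℝ) (hη0 : 0 < η)
    (hM : Summable fun l : ℕ => (l : ℝ) ^ (1 + η) * q l) (a : ℕ) (ha : 1 ≤ a) :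
    |∑' l : ℕ, u l * (l : ℝ) - ∑' l : ℕ, v l * (l : ℝ)| ≤
      a * y + 2 * ((a : ℝ) ^ (-η) * ∑' l : ℕ, (l : ℝ) ^ (1 + η) * q l) + x := by
  set B := (a : ℝ) ^ (-η) * ∑' l : ℕ, (l : ℝ) ^ (1 + η) * q l with hB
  obtain ⟨hqs, hqB⟩ := real_tail q hq0 η hη0 hM a ha
  have hB0 : 0 ≤ B := le_trans (tsum_nonneg fun l => mul_nonneg (hq0 l) (Nat.cast_nonneg _)) hqB
  have hsu : Summable u := Summable.of_nonneg_of_le hu0 hup hp1.summable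
  have hsv : Summable v := Summable.of_nonneg_of_le hv0 hvq hq1.summable
  -- tails
  have huts : Summable (fun l : ℕ => u l * ((l - a : ℕ) : ℝ)) :=
    Summable.of_nonneg_of_le (fun l => mul_nonneg (hu0 l) (Nat.cast_nonneg _))
      (fun l => mul_le_mul_of_nonneg_left (by exact_mod_cast Nat.sub_le l a) (hu0 l)) hus
  have hvts : Summable (fun l : ℕ => v l * ((l - a : ℕ) : ℝ)) :=
    Summable.of_nonneg_of_le (fun l => mul_nonneg (hv0 l) (Nat.cast_nonneg _))
      (fun l => mul_le_mul_of_nonneg_right (hvq l) (Nat.cast_nonneg _)) hqs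
  have hvB : ∑' l : ℕ, v l * ((l - a : ℕ) : ℝ) ≤ B :=
    (hvts.tsum_le_tsum (fun l => mul_le_mul_of_nonneg_right (hvq l) (Nat.cast_nonneg _)) hqs).trans hqB
  have conv : ∀ w : ℕ → ℝ, (∀ l, 0 ≤ w l) → Summable (fun l : ℕ => w l * ((l - a : ℕ) : ℝ)) →
      ENNReal.ofReal (∑' l : ℕ, w l * ((l - a : ℕ) : ℝ))
        = ∑' l, ENNReal.ofReal (w l) * ((l - a : ℕ) : ℝ≥0∞) := by
    intro w hw hs
    rw [ENNReal.ofReal_tsum_of_nonneg (fun l => mul_nonneg (hw l) (Nat.cast_nonneg _)) hs]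
    refine tsum_congr fun l => ?_
    rw [ENNReal.ofReal_mul (hw l), ENNReal.ofReal_natCast]
  have huB : ∑' l : ℕ, u l * ((l - a : ℕ) : ℝ) ≤ B + x := by
    have h0 : ENNReal.ofReal (∑' l : ℕ, u l * ((l - a : ℕ) : ℝ)) ≤ ENNReal.ofReal (B + x) := by
      rw [conv u hu0 huts, ENNReal.ofReal_add hB0 hx]
      calc ∑' l, ENNReal.ofReal (u l) * ((l - a : ℕ) : ℝ≥0∞)
          ≤ ∑' l, ENNReal.ofReal (p l) * ((l - a : ℕ) : ℝ≥0∞) :=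
            ENNReal.tsum_le_tsum fun l => mul_le_mul_left (ENNReal.ofReal_le_ofReal (hup l)) _
        _ ≤ _ := tail_le p q hp0 hp1 hq0 hq1 a
        _ ≤ _ := by
            rw [← conv q hq0 hqs]
            exact add_le_add (ENNReal.ofReal_le_ofReal hqB) hd
    exact (ENNReal.ofReal_le_ofReal_iff (by positivity)).1 h0
  have hut0 : 0 ≤ ∑' l : ℕ, u l * ((l - a : ℕ) : ℝ) :=
    tsum_nonneg fun l => mul_nonneg (hu0 l) (Nat.cast_nonneg _)
  have hvt0 : 0 ≤ ∑' l : ℕ, v l * ((l - a : ℕ) : ℝ) :=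
    tsum_nonneg fun l => mul_nonneg (hv0 l) (Nat.cast_nonneg _)
  -- truncated
  have hmin : ∀ w : ℕ → ℝ, (∀ l, 0 ≤ w l) → Summable w →
      Summable (fun l : ℕ => w l * ((min l a : ℕ) : ℝ)) := by
    intro w hw hs
    refine Summable.of_nonneg_of_le (fun l => mul_nonneg (hw l) (Nat.cast_nonneg _))
      (fun l => mul_le_mul_of_nonneg_left (?_ : _ ≤ (a:ℝ)) (hw l)) (hs.mul_right _)
    exact_mod_cast min_le_right l a
  have split : ∀ w : ℕ → ℝ, (∀ l, 0 ≤ w l) → Summable w →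
      Summable (fun l : ℕ => w l * ((l - a : ℕ) : ℝ)) →
      ∑' l : ℕ, w l * (l : ℝ) =
        ∑' l : ℕ, w l * ((min l a : ℕ) : ℝ) + ∑' l : ℕ, w l * ((l - a : ℕ) : ℝ) := by
    intro w hw hs ht
    rw [← (hmin w hw hs).tsum_add ht]
    refine tsum_congr fun l => ?_
    rw [← mul_add]
    congr 1
    have : l = min l a + (l - a) := by omega
    exact_mod_cast this
  have hab : Summable (fun l => |u l - v l|) := (hsu.sub hsv).abs
  have hmm : |∑' l : ℕ, u l * ((min l a : ℕ) : ℝ) - ∑' l : ℕ, v l * ((min l a : ℕ) : ℝ)| ≤ a * y := by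
    rw [← (hmin u hu0 hsu).tsum_sub (hmin v hv0 hsv)]
    have hle : ∀ l : ℕ, |u l * ((min l a : ℕ) : ℝ) - v l * ((min l a : ℕ) : ℝ)| ≤ a * |u l - v l| := by
      intro l
      rw [← sub_mul, abs_mul, mul_comm, Nat.abs_cast]
      refine mul_le_mul_of_nonneg_right ?_ (abs_nonneg _)
      exact_mod_cast min_le_right l a
    have hs2 := ((hmin u hu0 hsu).sub (hmin v hv0 hsv)).abs
    calc _ ≤ ∑' l : ℕ, |u l * ((min l a : ℕ) : ℝ) - v l * ((min l a : ℕ) : ℝ)| := by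
            simpa [Real.norm_eq_abs] using norm_tsum_le_tsum_norm (f := fun l : ℕ =>
              u l * ((min l a : ℕ) : ℝ) - v l * ((min l a : ℕ) : ℝ)) hs2
      _ ≤ ∑' l, a * |u l - v l| := hs2.tsum_le_tsum hle (hab.mul_left _)
      _ = a * ∑' l, |u l - v l| := tsum_mul_left
      _ ≤ a * y := mul_le_mul_of_nonneg_left huv (Nat.cast_nonneg _)
  rw [split u hu0 hsu huts, split v hv0 hsv hvts]
  rw [abs_le] at *
  constructor <;> linarith [hmm.1, hmm.2]

lemma ratio_bound (A A' p q B x : ℝ) (hq : 0 < q) (hpq : |p - q| ≤ 2 * x) (hx : 4 * x ≤ q)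
    (hA : |A' - A| ≤ B) :
    |A' / p - A / q| ≤ 2 / q * B + 4 * |A| / q ^ 2 * x := by
  have h1 := abs_le.1 hpq
  have hp : q / 2 ≤ p := by linarith [h1.1]
  have hp0 : 0 < p := by linarith
  have e : A' / p - A / q = (A' - A) / p + A * (q - p) / (p * q) := by
    field_simp; ring
  have hB0 : 0 ≤ B := (abs_nonneg _).trans hA
  rw [e]
  refine (abs_add_le _ _).trans (add_le_add ?_ ?_)
  · rw [abs_div, abs_of_pos hp0]
    calc |A' - A| / p ≤ B / (q / 2) := div_le_div₀ hB0 hA (by positivity) hp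
      _ = _ := by field_simp
  · rw [abs_div, abs_mul, abs_of_pos (mul_pos hp0 hq), abs_sub_comm]
    calc |A| * |p - q| / (p * q) ≤ |A| * (2 * x) / ((q / 2) * q) := by
          refine div_le_div₀ ?_ ?_ (by positivity) ?_
          · exact mul_nonneg (abs_nonneg _) ((abs_nonneg _).trans hpq)
          · exact mul_le_mul_of_nonneg_left hpq (abs_nonneg _)
          · exact mul_le_mul_of_nonneg_right hp hq.le
      _ = _ := by field_simp; ring

lemma empSB_nonneg {n : ℕ} (d : Fin n → ℕ) (k : ℕ) : 0 ≤ empSB d k := by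
  unfold empSB
  refine div_nonneg (Finset.sum_nonneg fun i _ => ?_) (Nat.cast_nonneg _)
  split_ifs
  · exact Nat.cast_nonneg _
  · exact le_rfl

lemma empSB_hasSum {n : ℕ} (d : Fin n → ℕ) (hd : degSum d ≠ 0) : HasSum (empSB d) 1 := by
  have hd' : (degSum d : ℝ) ≠ 0 := by exact_mod_cast hd
  have h1 : HasSum (fun k : ℕ => ∑ i, if d i = k then (k : ℝ) else 0) (∑ i, (d i : ℝ)) := by
    refine hasSum_sum fun i _ => ?_
    have := hasSum_ite_eq (d i) (d i : ℝ)
    convert this using 1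
    funext k
    by_cases hk : k = d i
    · subst hk; simp
    · simp [hk, Ne.symm hk]
  have h2 := h1.div_const (degSum d : ℝ)
  have h3 : (∑ i, (d i : ℝ)) / (degSum d : ℝ) = 1 := by
    rw [degSum] at *
    push_cast at *
    exact div_self hd'
  rw [h3] at h2
  exact h2

lemma jointDens_nonneg {n : ℕ} (d : Fin n → ℕ) (g : Fin n → Fin n → ℕ) (k l : ℕ) :
    0 ≤ jointDens d g k l := by
  unfold jointDens
  refine div_nonneg (Finset.sum_nonneg fun i _ => Finset.sum_nonneg fun j _ => ?_) (Nat.cast_nonneg _)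
  split_ifs
  · exact Nat.cast_nonneg _
  · exact le_rfl

lemma jointDens_le {n : ℕ} (d : Fin n → ℕ) (g : Fin n → Fin n → ℕ)
    (hsym : ∀ i j, g i j = g j i) (hdeg : ∀ i, degOf g i = d i) (k l : ℕ) :
    jointDens d g k l ≤ empSB d l := by
  unfold jointDens empSB
  refine div_le_div_of_nonneg_right ?_ (Nat.cast_nonneg _)
  rw [Finset.sum_comm]
  refine Finset.sum_le_sum fun j _ => ?_
  by_cases hj : d j = l
  · rw [if_pos hj]
    calc (∑ i, if d i = k ∧ d j = l then (g i j : ℝ) else 0) ≤ ∑ i, (g i j : ℝ) := by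
          refine Finset.sum_le_sum fun i _ => ?_
          split_ifs
          · exact le_rfl
          · exact Nat.cast_nonneg _
      _ = (l : ℝ) := by
          rw [← hj, ← hdeg j, degOf]
          push_cast
          exact Finset.sum_congr rfl fun i _ => by rw [hsym]
  · simp [hj]

lemma jointDens_zero {n : ℕ} (d : Fin n → ℕ) (g : Fin n → Fin n → ℕ) (k l : ℕ)
    (hl : l ∉ Finset.univ.image d) : jointDens d g k l = 0 := by
  have : ∀ j, d j ≠ l := by
    intro j hj
    exact hl (Finset.mem_image.2 ⟨j, Finset.mem_univ _, hj⟩)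
  simp [jointDens, this]

lemma empDens_zero {n : ℕ} (d : Fin n → ℕ) (l : ℕ)
    (hl : l ∉ Finset.univ.image d) : empDens d l = 0 := by
  have : ∀ j, d j ≠ l := by
    intro j hj
    exact hl (Finset.mem_image.2 ⟨j, Finset.mem_univ _, hj⟩)
  simp [empDens, this]

lemma inner_le {n : ℕ} (d : Fin n → ℕ) (g : Fin n → Fin n → ℕ) (h : ℕ → ℕ → ℝ) (k : ℕ)
    (hk : 0 < empDens d k) (y : ℝ)
    (hy : (∑' k : ℕ, ∑' l : ℕ, (if 0 < empDens d k then
                |jointDens d g k l - h k l| else 0)) ≤ y) :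
    ∑' l, |jointDens d g k l - h k l| ≤ y := by
  refine le_trans ?_ hy
  have hs : Summable (fun k : ℕ => ∑' l : ℕ, (if 0 < empDens d k then
                |jointDens d g k l - h k l| else 0)) := by
    refine summable_of_ne_finset_zero (s := Finset.univ.image d) fun b hb => ?_
    simp [empDens_zero d b hb]
  have := hs.le_tsum k (fun j _ => tsum_nonneg fun l => by
    split_ifs
    · exact abs_nonneg _
    · exact le_rfl)
  simpa only [if_pos hk] using this

lemma empSB_pos {n : ℕ} (d : Fin n → ℕ) (k : ℕ) (hk : 0 < empSB d k) :
    0 < empDens d k ∧ degSum d ≠ 0 := by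
  have hd : degSum d ≠ 0 := by
    intro h0
    simp [empSB, h0] at hk
  refine ⟨?_, hd⟩
  have hmem : k ∈ Finset.univ.image d := by
    by_contra hl
    have : ∀ j, d j ≠ k := by
      intro j hj
      exact hl (Finset.mem_image.2 ⟨j, Finset.mem_univ _, hj⟩)
    simp [empSB, this] at hk
  obtain ⟨i, _, hi⟩ := Finset.mem_image.1 hmem
  unfold empDens
  have hn : 0 < n := i.pos
  refine div_pos ?_ (by exact_mod_cast hn)
  refine Finset.sum_pos' (fun j _ => by split_ifs <;> simp) ⟨i, Finset.mem_univ _, by simp [hi]⟩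

lemma ev_half (ρ δ : ℝ) (hρ : δ < ρ) (C : ℝ) :
    ∀ᶠ n : ℕ in atTop, C * (n : ℝ) ^ (-ρ) ≤ (n : ℝ) ^ (-δ) / 2 := by
  have h1 : Tendsto (fun n : ℕ => C * (n : ℝ) ^ (-(ρ - δ))) atTop (nhds (C * 0)) :=
    ((tendsto_rpow_neg_atTop (sub_pos.2 hρ)).comp tendsto_natCast_atTop_atTop).const_mul C
  rw [mul_zero] at h1
  have h2 : ∀ᶠ n : ℕ in atTop, C * (n : ℝ) ^ (-(ρ - δ)) < 1 / 2 :=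
    h1.eventually_lt_const (by norm_num)
  filter_upwards [h2, eventually_ge_atTop 1] with n hn hn1
  have hn0 : (0 : ℝ) < n := by exact_mod_cast hn1
  have e : (n : ℝ) ^ (-ρ) = (n : ℝ) ^ (-(ρ - δ)) * (n : ℝ) ^ (-δ) := by
    rw [← Real.rpow_add hn0]; congr 1; ring
  have h3 : 0 < (n : ℝ) ^ (-δ) := Real.rpow_pos_of_pos hn0 _
  rw [e]
  nlinarith

lemma ev_bound (ε κ η δ : ℝ) (hκ : 0 < κ) (hη0 : 0 < η)
    (hδ : δ < min ε (κ * η / (η + 1))) (C1 C2 M : ℝ) (hC1 : 0 ≤ C1) (hM : 0 ≤ M) :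
    ∀ᶠ n : ℕ in atTop, ∃ a : ℕ, 1 ≤ a ∧
      C1 * (a * (n : ℝ) ^ (-κ) + 2 * ((a : ℝ) ^ (-η) * M) + (n : ℝ) ^ (-ε)) + C2 * (n : ℝ) ^ (-ε)
        ≤ (n : ℝ) ^ (-δ) := by
  obtain ⟨hδ1, hδ2⟩ := lt_min_iff.1 hδ
  filter_upwards [ev_half _ _ hδ1 (C1 + C2), ev_half _ _ hδ2 (C1 * (2 + 2 * M)),
    eventually_ge_atTop 1] with n h1 h2 hn1
  have hn1' : (1 : ℝ) ≤ n := by exact_mod_cast hn1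
  have hn0 : (0 : ℝ) < n := by linarith
  have hη1 : 0 < η + 1 := by linarith
  set b : ℝ := (n : ℝ) ^ (κ / (η + 1)) with hb
  have hb1 : 1 ≤ b := Real.one_le_rpow hn1' (by positivity)
  have hba : b ≤ ⌈b⌉₊ := Nat.le_ceil b
  have hab : (⌈b⌉₊ : ℝ) ≤ 2 * b := by
    have := Nat.ceil_lt_add_one (a := b) (by linarith)
    linarith
  refine ⟨⌈b⌉₊, ?_, ?_⟩
  · have : (1 : ℝ) ≤ ⌈b⌉₊ := hb1.trans hba
    exact_mod_cast this
  have e1 : b * (n : ℝ) ^ (-κ) = (n : ℝ) ^ (-(κ * η / (η + 1))) := by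
    rw [hb, ← Real.rpow_add hn0]; congr 1; field_simp; ring
  have e2 : b ^ (-η) = (n : ℝ) ^ (-(κ * η / (η + 1))) := by
    rw [hb, ← Real.rpow_mul hn0.le]; congr 1; field_simp
  have h3 : (⌈b⌉₊ : ℝ) * (n : ℝ) ^ (-κ) ≤ 2 * (n : ℝ) ^ (-(κ * η / (η + 1))) := by
    rw [← e1, ← mul_assoc]
    exact mul_le_mul_of_nonneg_right hab (by positivity)
  have h4 : (⌈b⌉₊ : ℝ) ^ (-η) ≤ (n : ℝ) ^ (-(κ * η / (η + 1))) := by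
    rw [← e2]
    exact Real.rpow_le_rpow_of_nonpos (by linarith) hba (by linarith)
  have h5 := mul_le_mul_of_nonneg_right h4 hM
  have h6 : C1 * (⌈b⌉₊ * (n : ℝ) ^ (-κ) + 2 * ((⌈b⌉₊ : ℝ) ^ (-η) * M))
      ≤ C1 * (2 * (n : ℝ) ^ (-(κ * η / (η + 1))) + 2 * ((n : ℝ) ^ (-(κ * η / (η + 1))) * M)) :=
    mul_le_mul_of_nonneg_left (by linarith) hC1
  linarith

lemma tendsto_of_bad {Ω : Type*} [MeasurableSpace Ω] (μ : Measure Ω) [IsProbabilityMeasure μ]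
    (A B S : ℕ → Set Ω)
    (hA : Tendsto (fun n => (μ (A n)).toReal) atTop (nhds 0))
    (hB : Tendsto (fun n => (μ (B n)).toReal) atTop (nhds 0))
    (hS : ∀ᶠ n in atTop, ∀ ω, ω ∉ A n → ω ∉ B n → ω ∈ S n) :
    Tendsto (fun n => (μ (S n)).toReal) atTop (nhds 1) := by
  have h1 : Tendsto (fun n => 1 - (μ (A n)).toReal - (μ (B n)).toReal) atTop (nhds 1) := by
    simpa using (hA.const_sub 1).sub hB
  refine tendsto_of_tendsto_of_tendsto_of_le_of_le' h1 tendsto_const_nhds ?_ ?_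
  · filter_upwards [hS] with n hn
    have hsub : (Set.univ : Set Ω) ⊆ (S n ∪ A n) ∪ B n := by
      intro ω _
      by_cases ha : ω ∈ A n
      · exact Or.inl (Or.inr ha)
      by_cases hb : ω ∈ B n
      · exact Or.inr hb
      exact Or.inl (Or.inl (hn ω ha hb))
    have h2 : (1 : ℝ) = μ.real Set.univ := by simp
    have h3 : μ.real Set.univ ≤ μ.real ((S n ∪ A n) ∪ B n) := measureReal_mono hsub
    have h4 := measureReal_union_le (μ := μ) (S n ∪ A n) (B n)
    have h5 := measureReal_union_le (μ := μ) (S n) (A n)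
    simp only [Measure.real] at *
    linarith
  · exact Eventually.of_forall fun n => measureReal_le_one (μ := μ) (s := S n)

lemma exists_good {Ω : Type*} [MeasurableSpace Ω] (μ : Measure Ω) [IsProbabilityMeasure μ]
    (A B : ℕ → Set Ω)
    (hA : Tendsto (fun n => (μ (A n)).toReal) atTop (nhds 0))
    (hB : Tendsto (fun n => (μ (B n)).toReal) atTop (nhds 0)) :
    ∀ᶠ n in atTop, ∃ ω, ω ∉ A n ∧ ω ∉ B n := by
  have h := tendsto_of_bad μ A B (fun n => {ω | ω ∉ A n ∧ ω ∉ B n}) hA hB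
    (Eventually.of_forall fun n ω h1 h2 => ⟨h1, h2⟩)
  filter_upwards [h.eventually_const_lt (by norm_num : (0:ℝ) < 1)] with n hn
  by_contra hne
  have : {ω | ω ∉ A n ∧ ω ∉ B n} = (∅ : Set Ω) := by
    ext ω
    simp only [Set.mem_ofPred_eq, Set.mem_empty_iff_false, iff_false]
    exact fun hh => hne ⟨ω, hh⟩
  rw [this] at hn
  simp at hn

/-- General convergence of the ANND: for a sequence of random multigraphs
satisfying the degree regularity assumption (i), the joint-distribution regularity
assumption (ii), and a finite `(2+η)`-moment of the limiting degree distribution (iii),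
`Φ_n(k) → Φ(k)` in probability, with rate `n^{-δ}` for every
`0 < δ < min{ε, κη/(η+1)}` and every fixed `k` with `f(k) > 0`. -/
theorem stmt4
    {Ω : Type*} [MeasurableSpace Ω] (μ : Measure Ω) [IsProbabilityMeasure μ]
    (D : (n : ℕ) → Ω → Fin n → ℕ) (G : (n : ℕ) → Ω → Fin n → Fin n → ℕ)
    (hsym : ∀ n ω i j, G n ω i j = G n ω j i)
    (hdiag : ∀ n ω i, Even (G n ω i i))
    (hdeg : ∀ n ω i, degOf (G n ω) i = D n ω i)
    -- the limiting degree distribution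
    (f : ℕ → ℝ) (hf0 : ∀ k, 0 ≤ f k) (hf1 : HasSum f 1)
    -- Assumption 1 (regularity of the degrees)
    (α ε : ℝ) (hα : 0 < α) (hε : 0 < ε)
    (hOmega : (fun n : ℕ =>
        (μ {ω | ENNReal.ofReal ((n : ℝ) ^ (-ε)) <
            max (d1 (empDens (D n ω)) f)
              (d1 (empSB (D n ω)) (sizeBiased f))}).toReal)
      =O[atTop] fun n : ℕ => (n : ℝ) ^ (-α))
    -- Assumption 2 (regularity of the joint distribution)
    (h : ℕ → ℕ → ℝ) (hh0 : ∀ k l, 0 ≤ h k l)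
    (hh1 : HasSum (fun p : ℕ × ℕ => h p.1 p.2) 1)
    (hhsupp : ∀ k, h k 0 = 0 ∧ h 0 k = 0)
    (κ : ℝ) (hκ : 0 < κ)
    (hGamma : Tendsto (fun n : ℕ =>
        (μ {ω | (n : ℝ) ^ (-κ) <
            ∑' k : ℕ, ∑' l : ℕ,
              (if 0 < empDens (D n ω) k then
                |jointDens (D n ω) (G n ω) k l - h k l| else 0)}).toReal)
      atTop (nhds 0))
    -- finite (2+η)-moment of the limit distribution
    (η : ℝ) (hη0 : 0 < η) (hη1 : η < 1)
    (hmom : Summable fun k : ℕ => (k : ℝ) ^ (2 + η) * f k)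
    -- conclusion
    (k : ℕ) (hk : 0 < f k)
    (δ : ℝ) (hδ0 : 0 < δ) (hδ : δ < min ε (κ * η / (η + 1))) :
    Tendsto (fun n : ℕ =>
        (μ {ω | |ANND (D n ω) (G n ω) k -
            (if 0 < sizeBiased f k then
              (∑' l : ℕ, h k l * (l : ℝ)) / sizeBiased f k else 0)| ≤
          (n : ℝ) ^ (-δ)}).toReal)
      atTop (nhds 1) := by
  -- the case `k = 0` is trivial
  rcases Nat.eq_zero_or_pos k with hk0 | hkpos
  · have hset : ∀ n : ℕ, {ω | |ANND (D n ω) (G n ω) k -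
            (if 0 < sizeBiased f k then
              (∑' l : ℕ, h k l * (l : ℝ)) / sizeBiased f k else 0)| ≤
          (n : ℝ) ^ (-δ)} = Set.univ := by
      intro n
      ext ω
      subst hk0
      have : (0:ℝ) ≤ (n : ℝ) ^ (-δ) := by positivity
      simp [ANND, empSB, sizeBiased, this]
    simp_rw [hset]
    simp
  -- summability
  have hmom1 : Summable fun l : ℕ => (l : ℝ) * f l := by
    refine Summable.of_nonneg_of_le (fun l => mul_nonneg (Nat.cast_nonneg _) (hf0 l)) (fun l => ?_) hmom
    refine mul_le_mul_of_nonneg_right ?_ (hf0 l)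
    rcases Nat.eq_zero_or_pos l with h0 | h0
    · subst h0
      simp only [Nat.cast_zero]
      exact Real.rpow_nonneg le_rfl _
    · have : (1:ℝ) ≤ l := by exact_mod_cast h0
      exact Real.self_le_rpow_of_one_le this (by linarith)
  have hkR : (0:ℝ) < k := by exact_mod_cast hkpos
  have hm : 0 < meanPMF f := hmom1.tsum_pos (fun l => mul_nonneg (Nat.cast_nonneg _) (hf0 l)) k
    (mul_pos hkR hk)
  have hq : 0 < sizeBiased f k := div_pos (mul_pos hkR hk) hm
  have hq0 : ∀ l, 0 ≤ sizeBiased f l := fun l =>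
    div_nonneg (mul_nonneg (Nat.cast_nonneg _) (hf0 l)) hm.le
  have hq1 : HasSum (sizeBiased f) 1 := by
    have := hmom1.hasSum.div_const (meanPMF f)
    rw [show (∑' l : ℕ, (l : ℝ) * f l) = meanPMF f from rfl, div_self hm.ne'] at this
    exact this
  have hM : Summable fun l : ℕ => (l : ℝ) ^ (1 + η) * sizeBiased f l := by
    refine (hmom.div_const (meanPMF f)).congr fun l => ?_
    unfold sizeBiased
    rcases Nat.eq_zero_or_pos l with h0 | h0
    · subst h0
      simp [Real.zero_rpow (show (2 + η) ≠ 0 by linarith)]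
    · have : (0:ℝ) < l := by exact_mod_cast h0
      rw [show (2 + η) = (1 + η) + 1 by ring, Real.rpow_add this, Real.rpow_one]
      ring
  -- bad events
  have hA := hOmega.trans_tendsto
    ((tendsto_rpow_neg_atTop hα).comp tendsto_natCast_atTop_atTop)
  have hxt : ∀ r : ℝ, 0 < r → Tendsto (fun n : ℕ => (n : ℝ) ^ (-r)) atTop (nhds 0) := fun r hr =>
    (tendsto_rpow_neg_atTop hr).comp tendsto_natCast_atTop_atTop
  have hsmall : ∀ᶠ n : ℕ in atTop, 4 * (n : ℝ) ^ (-ε) < sizeBiased f k := by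
    have := (hxt ε hε).const_mul 4
    rw [mul_zero] at this
    exact this.eventually_lt_const hq
  -- consequences on the good event
  have key : ∀ n : ℕ, 4 * (n : ℝ) ^ (-ε) < sizeBiased f k → ∀ ω,
      ω ∉ {ω | ENNReal.ofReal ((n : ℝ) ^ (-ε)) <
            max (d1 (empDens (D n ω)) f) (d1 (empSB (D n ω)) (sizeBiased f))} →
      ω ∉ {ω | (n : ℝ) ^ (-κ) <
            ∑' k : ℕ, ∑' l : ℕ,
              (if 0 < empDens (D n ω) k then
                |jointDens (D n ω) (G n ω) k l - h k l| else 0)} →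
      d1 (empSB (D n ω)) (sizeBiased f) ≤ ENNReal.ofReal ((n : ℝ) ^ (-ε)) ∧
      0 < empDens (D n ω) k ∧ degSum (D n ω) ≠ 0 ∧
      ∑' l, |jointDens (D n ω) (G n ω) k l - h k l| ≤ (n : ℝ) ^ (-κ) := by
    intro n hn ω h1 h2
    simp only [Set.mem_ofPred_eq, not_lt] at h1 h2
    have hd := (le_max_right _ _).trans h1
    have hx0 : (0:ℝ) ≤ (n : ℝ) ^ (-ε) := by positivity
    have h3 := abs_le.1 (diff_le _ _ _ hx0 hd k)
    obtain ⟨h4, h5⟩ := empSB_pos (D n ω) k (by linarith [h3.1])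
    exact ⟨hd, h4, h5, inner_le _ _ _ k h4 _ h2⟩
  have hjs : ∀ n ω, Summable (fun l => jointDens (D n ω) (G n ω) k l) := fun n ω =>
    summable_of_ne_finset_zero (s := Finset.univ.image (D n ω))
      fun b hb => jointDens_zero _ _ _ _ hb
  have hjs' : ∀ n ω, Summable (fun l : ℕ => jointDens (D n ω) (G n ω) k l * (l : ℝ)) := fun n ω =>
    summable_of_ne_finset_zero (s := Finset.univ.image (D n ω))
      fun b hb => by rw [jointDens_zero _ _ _ _ hb, zero_mul]
  have hvs : Summable (fun l => h k l) := hh1.summable.prod_factor k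
  -- domination of `h k` by the size-biased law
  have hvq : ∀ l, h k l ≤ sizeBiased f l := by
    intro l
    have ht : Tendsto (fun n : ℕ => sizeBiased f l + 2 * (n : ℝ) ^ (-ε) + (n : ℝ) ^ (-κ)) atTop
        (nhds (sizeBiased f l)) := by
      simpa using (((hxt ε hε).const_mul 2).const_add (sizeBiased f l)).add (hxt κ hκ)
    refine ge_of_tendsto ht ?_
    filter_upwards [exists_good μ _ _ hA hGamma, hsmall] with n hn hs
    obtain ⟨ω, h1, h2⟩ := hn
    obtain ⟨hd, _, _, hi⟩ := key n hs ω h1 h2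
    have hx0 : (0:ℝ) ≤ (n : ℝ) ^ (-ε) := by positivity
    have h3 := abs_le.1 (diff_le _ _ _ hx0 hd l)
    have h4 := (((hjs n ω).sub hvs).abs.le_tsum l (fun j _ => abs_nonneg _)).trans hi
    have h5 := abs_le.1 h4
    have h6 := jointDens_le (D n ω) (G n ω) (hsym n ω) (hdeg n ω) k l
    linarith [h3.1, h3.2, h5.1, h5.2]
  refine tendsto_of_bad μ _ _ _ hA hGamma ?_
  have hM0 : 0 ≤ ∑' l : ℕ, (l : ℝ) ^ (1 + η) * sizeBiased f l :=
    tsum_nonneg fun l => mul_nonneg (by positivity) (hq0 l)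
  filter_upwards [hsmall, ev_bound ε κ η δ hκ hη0 hδ (2 / sizeBiased f k)
    (4 * |∑' l : ℕ, h k l * (l : ℝ)| / sizeBiased f k ^ 2) _ (by positivity) hM0] with n hs hb ω h1 h2
  obtain ⟨a, ha, hb⟩ := hb
  obtain ⟨hd, hdens, hds, hi⟩ := key n hs ω h1 h2
  have hx0 : (0:ℝ) ≤ (n : ℝ) ^ (-ε) := by positivity
  rw [if_pos hq, ANND, if_pos hdens]
  refine le_trans ?_ hb
  refine ratio_bound _ _ _ _ _ _ hq (diff_le _ _ _ hx0 hd k) hs.le ?_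
  exact det_bound _ _ _ _ (empSB_nonneg _) (empSB_hasSum _ hds) hq0 hq1
    (jointDens_nonneg _ _ k) (jointDens_le _ _ (hsym n ω) (hdeg n ω) k) (hh0 k) hvq (hjs' n ω)
    _ _ hx0 hd hi η hη0 hM a ha

end ANNDPaper
end

section
/- Let 𝒟 be regularly varying with exponent 1 < γ < 2 and let {G_n}_{n≥1} be generated by the erased configuration model with degree sequences IID(𝒟), coupled with the underlying configuration model multigraph. Set a = (γ − 1)²/(2γ) > 0 and let k be such that f^*(k) > 0, where f^*(k) = k f(k)/E[𝒟] and f is the density of 𝒟. Then lim_{n→∞} P(|Φ̂_n(k) − Φ_n(k)| > n^{2/γ − 1 − a}) = 0, where Φ_n is the average nearest neighbor degree computed on the configuration model multigraph and Φ̂_n is the one computed on the erased graph. -/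
open MeasureTheory Filter
open scoped ENNReal NNReal BigOperators

namespace ANNDPaper

set_option linter.unusedSectionVars false

section Counting

variable {V : Type*} [Fintype V] [DecidableEq V]

/-- Perfect matchings of a finite type. -/
abbrev PM (V : Type*) : Type _ := {σ : Equiv.Perm V // ∀ s, σ s ≠ s ∧ σ (σ s) = s}

/-- Conjugation of a matching by a transposition. -/
def conjM (a b : V) (σ : PM V) : PM V :=
  ⟨Equiv.swap a b * σ.1 * Equiv.swap a b, by
    intro s
    constructor
    · intro h
      have h1 : σ.1 (Equiv.swap a b s) = Equiv.swap a b s := by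
        have := congrArg (Equiv.swap a b) h
        simpa [Equiv.Perm.mul_apply] using this
      exact (σ.2 _).1 h1
    · simp [Equiv.Perm.mul_apply, (σ.2 _).2]⟩

lemma conjM_apply (a b : V) (σ : PM V) (s : V) :
    (conjM a b σ).1 s = Equiv.swap a b (σ.1 (Equiv.swap a b s)) := rfl

lemma conjM_conjM (a b : V) (σ : PM V) : conjM a b (conjM a b σ) = σ := by
  apply Subtype.ext
  ext s
  simp [conjM_apply]

open Classical in
/-- number of matchings with `s ↦ t`. -/
noncomputable def c1 (s t : V) : ℕ := (Finset.univ.filter (fun σ : PM V => σ.1 s = t)).card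

open Classical in
/-- number of matchings with `s ↦ t`, `s' ↦ t'`. -/
noncomputable def c2 (s t s' t' : V) : ℕ :=
  (Finset.univ.filter (fun σ : PM V => σ.1 s = t ∧ σ.1 s' = t')).card

lemma c1_le (s t t' : V) (ht : t ≠ s) (ht' : t' ≠ s) : c1 s t ≤ c1 s t' := by
  classical
  unfold c1
  apply Finset.card_le_card_of_injOn (conjM t t')
  · intro σ hσ
    simp only [Finset.coe_filter, Finset.mem_univ, true_and, Set.mem_ofPred_eq] at hσ ⊢
    rw [conjM_apply, Equiv.swap_apply_of_ne_of_ne ht.symm ht'.symm, hσ, Equiv.swap_apply_left]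
  · intro σ _ τ _ h
    have := congrArg (conjM t t') h
    simpa [conjM_conjM] using this

lemma c2_le (s t s' t' t'' : V) 
    (h1 : t' ≠ s) (h2 : t' ≠ t) (h3 : t' ≠ s')
    (k1 : t'' ≠ s) (k2 : t'' ≠ t) (k3 : t'' ≠ s') : c2 s t s' t' ≤ c2 s t s' t'' := by
  classical
  unfold c2
  apply Finset.card_le_card_of_injOn (conjM t' t'')
  · intro σ hσ
    simp only [Finset.coe_filter, Finset.mem_univ, true_and, Set.mem_ofPred_eq] at hσ ⊢
    rw [conjM_apply, conjM_apply, Equiv.swap_apply_of_ne_of_ne h1.symm k1.symm, hσ.1,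
      Equiv.swap_apply_of_ne_of_ne h3.symm k3.symm, hσ.2, Equiv.swap_apply_left,
      Equiv.swap_apply_of_ne_of_ne h2.symm k2.symm]
    exact ⟨rfl, rfl⟩
  · intro σ _ τ _ h
    have := congrArg (conjM t' t'') h
    simpa [conjM_conjM] using this

lemma c1_self (s : V) : c1 s s = 0 := by
  classical
  unfold c1
  rw [Finset.card_eq_zero, Finset.filter_eq_empty_iff]
  intro σ _
  exact (σ.2 s).1

lemma c1_bound (s t : V) : (Fintype.card V - 1) * c1 s t ≤ Nat.card (PM V) := by
  classical
  by_cases ht : t = s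
  · subst ht; simp [c1_self]
  have h1 : ∑ u ∈ Finset.univ.erase s, c1 s u ≤ Nat.card (PM V) := by
    rw [Nat.card_eq_fintype_card, ← Finset.card_univ,
      Finset.card_eq_sum_card_fiberwise (f := fun σ : PM V => σ.1 s)
        (t := Finset.univ.erase s)]
    · apply le_of_eq
      rfl
    · intro σ _
      simp [(σ.2 s).1]
  calc (Fintype.card V - 1) * c1 s t = ∑ u ∈ Finset.univ.erase s, c1 s t := by
        simp [Finset.card_erase_of_mem]
    _ ≤ ∑ u ∈ Finset.univ.erase s, c1 s u :=
        Finset.sum_le_sum fun u hu => c1_le s t u ht (by simpa using hu)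
    _ ≤ _ := h1

lemma c2_bound (s t s' t' : V) (hs : s' ≠ s) (hst : s' ≠ t) :
    (Fintype.card V - 3) * c2 s t s' t' ≤ c1 s t := by
  classical
  by_cases h0 : c2 s t s' t' = 0
  · simp [h0]
  obtain ⟨σ, hσ⟩ : ∃ σ : PM V, σ.1 s = t ∧ σ.1 s' = t' := by
    by_contra hcon
    push Not at hcon
    apply h0
    unfold c2
    rw [Finset.card_eq_zero, Finset.filter_eq_empty_iff]
    intro σ _ h
    exact hcon σ h.1 h.2
  have e1 : t' ≠ s := by
    intro h
    have : σ.1 t' = t := by rw [h]; exact hσ.1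
    rw [← hσ.2, (σ.2 s').2] at this
    exact hst this
  have e2 : t' ≠ t := by
    intro h
    have : σ.1 s' = σ.1 s := by rw [hσ.1, hσ.2, h]
    exact hs (σ.1.injective this)
  have e3 : t' ≠ s' := by rw [← hσ.2]; exact (σ.2 s').1
  have h1 : ∑ u ∈ Finset.univ \ {s, t, s'}, c2 s t s' u ≤ c1 s t := by
    have : c1 s t = ∑ u ∈ Finset.univ, c2 s t s' u := by
      unfold c1
      rw [Finset.card_eq_sum_card_fiberwise (f := fun σ : PM V => σ.1 s')
        (t := Finset.univ) (by intro σ _; simp)]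
      apply Finset.sum_congr rfl
      intro u _
      unfold c2
      rw [Finset.filter_filter]
    rw [this]
    exact Finset.sum_le_sum_of_subset (Finset.subset_univ _)
  calc (Fintype.card V - 3) * c2 s t s' t'
      ≤ (Finset.univ \ {s, t, s'} : Finset V).card * c2 s t s' t' := by
        apply Nat.mul_le_mul_right
        rw [Finset.card_sdiff_of_subset (Finset.subset_univ _), Finset.card_univ]
        have := Finset.card_le_three (a := s) (b := t) (c := s')
        omega
    _ = ∑ u ∈ Finset.univ \ {s, t, s'}, c2 s t s' t' := by simp
    _ ≤ ∑ u ∈ Finset.univ \ {s, t, s'}, c2 s t s' u := by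
        apply Finset.sum_le_sum
        intro u hu
        simp only [Finset.mem_sdiff, Finset.mem_univ, true_and, Finset.mem_insert,
          Finset.mem_singleton, not_or] at hu
        exact c2_le s t s' t' u e1 e2 e3 hu.1 hu.2.1 hu.2.2
    _ ≤ _ := h1

end Counting

section Sums

variable {n : ℕ} (d : Fin n → ℕ)

lemma card_stubs : Fintype.card (Stubs d) = degSum d := by
  simp [Fintype.card_sigma, degSum]

lemma cmEdges_eq (σ : PM (Stubs d)) (i j : Fin n) :
    cmEdges d σ i j = ∑ s : Fin (d i), ∑ t : Fin (d j),
      if σ.1 ⟨i, s⟩ = ⟨j, t⟩ then 1 else 0 := by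
  unfold cmEdges
  rw [Finset.card_filter]
  apply Finset.sum_congr rfl
  intro s _
  rcases h : σ.1 ⟨i, s⟩ with ⟨a, b⟩
  by_cases hj : a = j
  · subst hj
    simp
  · simp [hj]

lemma sum_c1 (s t : Stubs d) :
    (∑ σ : PM (Stubs d), if σ.1 s = t then 1 else 0) = c1 s t := by
  classical
  unfold c1
  rw [Finset.card_filter]

lemma sum_c2 (s t s' t' : Stubs d) :
    (∑ σ : PM (Stubs d), if σ.1 s = t ∧ σ.1 s' = t' then 1 else 0) = c2 s t s' t' := by
  classical
  unfold c2
  rw [Finset.card_filter]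

lemma sumG_le (i j : Fin n) :
    (degSum d - 1) * ∑ σ : PM (Stubs d), cmEdges d σ i j
      ≤ d i * d j * Nat.card (PM (Stubs d)) := by
  have h : ∑ σ : PM (Stubs d), cmEdges d σ i j
      = ∑ s : Fin (d i), ∑ t : Fin (d j), c1 (V := Stubs d) ⟨i, s⟩ ⟨j, t⟩ := by
    simp_rw [cmEdges_eq]
    rw [Finset.sum_comm]
    apply Finset.sum_congr rfl
    intro s _
    rw [Finset.sum_comm]
    apply Finset.sum_congr rfl
    intro t _
    exact sum_c1 d _ _
  rw [h, Finset.mul_sum]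
  calc _ ≤ ∑ s : Fin (d i), ∑ t : Fin (d j), Nat.card (PM (Stubs d)) := by
        apply Finset.sum_le_sum
        intro s _
        rw [Finset.mul_sum]
        apply Finset.sum_le_sum
        intro t _
        rw [← card_stubs]
        exact c1_bound _ _
    _ = _ := by simp [mul_assoc]

lemma GG_le (σ : PM (Stubs d)) (i j : Fin n) :
    cmEdges d σ i j * (cmEdges d σ i j - 1) = ∑ s : Fin (d i), ∑ s' : Fin (d i),
      ∑ t : Fin (d j), ∑ t' : Fin (d j),
      if s' ≠ s ∧ (σ.1 ⟨i, s⟩ = ⟨j, t⟩ ∧ σ.1 ⟨i, s'⟩ = ⟨j, t'⟩) then 1 else 0 := by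
  classical
  have key : ∀ s : Fin (d i), (∑ t : Fin (d j),
      if σ.1 ⟨i, s⟩ = ⟨j, t⟩ then 1 else 0) = if (σ.1 ⟨i, s⟩).1 = j then 1 else 0 := by
    intro s
    rcases h : σ.1 ⟨i, s⟩ with ⟨a, b⟩
    by_cases hj : a = j
    · subst hj
      simp
    · simp [hj]
  have h2 : ∀ s s' : Fin (d i), (∑ t : Fin (d j), ∑ t' : Fin (d j),
      if s' ≠ s ∧ (σ.1 ⟨i, s⟩ = ⟨j, t⟩ ∧ σ.1 ⟨i, s'⟩ = ⟨j, t'⟩) then 1 else 0)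
      = if s' ≠ s then (if (σ.1 ⟨i, s⟩).1 = j then 1 else 0) *
          (if (σ.1 ⟨i, s'⟩).1 = j then 1 else 0) else 0 := by
    intro s s'
    by_cases hs : s' = s
    · simp [hs]
    · rw [← key, ← key, Finset.sum_mul_sum]
      simp only [ne_eq, hs, not_false_eq_true, true_and, if_true]
      apply Finset.sum_congr rfl
      intro t _
      apply Finset.sum_congr rfl
      intro t' _
      split_ifs <;> simp_all
  simp_rw [h2]
  set S := Finset.univ.filter (fun s : Fin (d i) => ((σ.1 ⟨i, s⟩).1 = j)) with hS
  have : cmEdges d σ i j * (cmEdges d σ i j - 1) = S.offDiag.card := by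
    rw [Finset.offDiag_card, Nat.mul_sub, mul_one]
    rfl
  rw [this, ← Finset.sum_product', Finset.univ_product_univ]
  rw [Finset.card_eq_sum_ones, ← Finset.sum_filter_add_sum_filter_not Finset.univ
    (fun x : Fin (d i) × Fin (d i) => x ∈ S.offDiag)]
  have e1 : ∑ x : Fin (d i) × Fin (d i) with x ∈ S.offDiag,
      (if x.2 ≠ x.1 then (if (σ.1 ⟨i, x.1⟩).1 = j then 1 else 0) *
          (if (σ.1 ⟨i, x.2⟩).1 = j then 1 else 0) else 0) = ∑ x ∈ S.offDiag, 1 := by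
    apply Finset.sum_congr
    · ext; simp
    · intro x hx
      simp only [Finset.mem_offDiag, hS, Finset.mem_filter, Finset.mem_univ, true_and] at hx
      simp [hx.1, hx.2.1, Ne.symm hx.2.2]
  have e2 : ∑ x : Fin (d i) × Fin (d i) with x ∉ S.offDiag,
      (if x.2 ≠ x.1 then (if (σ.1 ⟨i, x.1⟩).1 = j then 1 else 0) *
          (if (σ.1 ⟨i, x.2⟩).1 = j then 1 else 0) else 0) = 0 := by
    apply Finset.sum_eq_zero
    intro x hx
    simp only [Finset.mem_offDiag, hS, Finset.mem_filter, Finset.mem_univ, true_and] at hx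
    by_cases h1 : x.2 = x.1
    · simp [h1]
    · by_cases h2 : (σ.1 ⟨i, x.1⟩).1 = j
      · have : ¬ (σ.1 ⟨i, x.2⟩).1 = j := fun h3 => hx ⟨h2, h3, Ne.symm h1⟩
        simp [this]
      · simp [h2]
  rw [e1, e2, add_zero]

lemma sumGG_le (i j : Fin n) (hij : i ≠ j) :
    (degSum d - 1) * (degSum d - 3) *
      ∑ σ : PM (Stubs d), cmEdges d σ i j * (cmEdges d σ i j - 1)
      ≤ (d i * d j) ^ 2 * Nat.card (PM (Stubs d)) := by
  have h : ∑ σ : PM (Stubs d), cmEdges d σ i j * (cmEdges d σ i j - 1)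
      = ∑ s : Fin (d i), ∑ s' : Fin (d i), ∑ t : Fin (d j), ∑ t' : Fin (d j),
        if s' ≠ s then c2 (V := Stubs d) ⟨i, s⟩ ⟨j, t⟩ ⟨i, s'⟩ ⟨j, t'⟩ else 0 := by
    simp_rw [GG_le]
    rw [Finset.sum_comm]
    apply Finset.sum_congr rfl
    intro s _
    rw [Finset.sum_comm]
    apply Finset.sum_congr rfl
    intro s' _
    rw [Finset.sum_comm]
    apply Finset.sum_congr rfl
    intro t _
    rw [Finset.sum_comm]
    apply Finset.sum_congr rfl
    intro t' _
    by_cases hs : s' = s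
    · simp [hs]
    · simp only [ne_eq, hs, not_false_eq_true, true_and, if_true]
      exact sum_c2 d _ _ _ _
  rw [h]
  simp_rw [Finset.mul_sum]
  calc _ ≤ ∑ s : Fin (d i), ∑ s' : Fin (d i), ∑ t : Fin (d j), ∑ t' : Fin (d j),
          Nat.card (PM (Stubs d)) := by
        refine Finset.sum_le_sum fun s _ => Finset.sum_le_sum fun s' _ =>
          Finset.sum_le_sum fun t _ => Finset.sum_le_sum fun t' _ => ?_
        by_cases hs : s' = s
        · simp [hs]
        · rw [if_pos hs, mul_assoc]
          have hb1 := c1_bound (V := Stubs d) ⟨i, s⟩ ⟨j, t⟩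
          have hb2 := c2_bound (V := Stubs d) ⟨i, s⟩ ⟨j, t⟩ ⟨i, s'⟩ ⟨j, t'⟩
            (by simpa using hs) (by intro h; exact hij (congrArg Sigma.fst h))
          rw [card_stubs] at hb1 hb2
          exact (Nat.mul_le_mul_left _ hb2).trans hb1
    _ = _ := by simp; ring

/-- number of erased edges at `i` -/
def er (g : Fin n → Fin n → ℕ) (i : Fin n) : ℕ := ∑ j, (g i j - erase g i j)

lemma er_sum (g : Fin n → Fin n → ℕ) :
    ∑ i, er g i = ∑ i, ∑ j, if i = j then g i j else g i j - 1 := by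
  unfold er erase
  refine Finset.sum_congr rfl fun i _ => Finset.sum_congr rfl fun j _ => ?_
  split_ifs with h <;> omega

lemma interp (x y s : ℝ) (hx : 0 ≤ x) (hs1 : 1 ≤ s) (hs2 : s ≤ 2) (h1 : y ≤ 2 * x)
    (h2 : y ≤ 4 * x ^ 2) : y ≤ 4 * x ^ s := by
  rcases le_total x 1 with h | h
  · rcases hx.eq_or_lt with h0 | h0
    · subst h0
      rw [Real.zero_rpow (by linarith)]
      linarith
    · have : x ^ (2:ℝ) ≤ x ^ s := Real.rpow_le_rpow_of_exponent_ge h0 h hs2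
      rw [Real.rpow_two] at this
      linarith
  · have : x ^ (1:ℝ) ≤ x ^ s := Real.rpow_le_rpow_of_exponent_le h hs1
    rw [Real.rpow_one] at this
    linarith

/-- The bound on the expected number of erased edges. -/
noncomputable def erBound (s : ℝ) : ℝ :=
  ∑ i, ∑ j, if i = j then 2 * ((d i : ℝ) ^ s * (n : ℝ) ^ (1 - s))
    else 4 * ((d i : ℝ) ^ s * (d j : ℝ) ^ s * (n : ℝ) ^ (-s))

lemma sum_er_le (s : ℝ) (hs1 : 1 ≤ s) (hs2 : s ≤ 2) (hn : 6 ≤ n) (hL : n ≤ degSum d) :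
    ((∑ σ : PM (Stubs d), ∑ i, er (cmEdges d σ) i : ℕ) : ℝ)
      ≤ erBound d s * Nat.card (PM (Stubs d)) := by
  simp_rw [er_sum]
  rw [Finset.sum_comm]
  unfold erBound
  rw [Finset.sum_mul]
  push_cast
  refine Finset.sum_le_sum fun i _ => ?_
  rw [Finset.sum_comm, Finset.sum_mul]
  refine Finset.sum_le_sum fun j _ => ?_
  set C : ℝ := (Nat.card (PM (Stubs d)) : ℝ) with hC
  have hC0 : 0 ≤ C := Nat.cast_nonneg _
  set L := degSum d with hLdef
  have hnR : (6:ℝ) ≤ n := by exact_mod_cast hn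
  have hLR : (n:ℝ) ≤ L := by exact_mod_cast hL
  have hL6 : (6:ℝ) ≤ L := hnR.trans hLR
  have hL0 : (0:ℝ) < L := by linarith
  have hG : (∑ σ : PM (Stubs d), (cmEdges d σ i j : ℝ)) ≤ 2 * ((d i : ℝ) * d j / L) * C := by
    have h := sumG_le d i j
    have h' : ((L:ℝ) - 1) * ∑ σ : PM (Stubs d), (cmEdges d σ i j : ℝ) ≤ d i * d j * C := by
      have h2 : ((L - 1 : ℕ):ℝ) = (L:ℝ) - 1 := by
        rw [Nat.cast_sub (by omega)]; simp
      rw [← h2, hC]; exact_mod_cast h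
    have h3 : 0 ≤ ∑ σ : PM (Stubs d), (cmEdges d σ i j : ℝ) :=
      Finset.sum_nonneg fun _ _ => Nat.cast_nonneg _
    rw [show 2 * ((d i : ℝ) * d j / L) * C = (2 * (d i * d j * C)) / L by ring,
      le_div_iff₀ hL0]
    nlinarith
  by_cases hij : i = j
  · subst hij
    simp only [if_true]
    refine hG.trans (mul_le_mul_of_nonneg_right ?_ hC0)
    refine mul_le_mul_of_nonneg_left ?_ (by norm_num)
    rcases Nat.eq_zero_or_pos (d i) with h0 | h0
    · simp only [h0, Nat.cast_zero, mul_zero, zero_div]; positivity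
    have hd0 : (0:ℝ) < d i := by exact_mod_cast h0
    have hdL : (d i : ℝ) ≤ L := by
      have : d i ≤ L := Finset.single_le_sum (f := d) (fun _ _ => Nat.zero_le _) (Finset.mem_univ i)
      exact_mod_cast this
    calc (d i : ℝ) * d i / L = (d i : ℝ) ^ s * ((d i : ℝ) ^ (2 - s) * (L:ℝ) ^ (-1:ℝ)) := by
          rw [← mul_assoc, ← Real.rpow_add hd0, Real.rpow_neg_one]
          norm_num
          rw [← Real.rpow_natCast]; norm_num; ring
      _ ≤ (d i : ℝ) ^ s * ((L : ℝ) ^ (2 - s) * (L:ℝ) ^ (-1:ℝ)) := by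
          gcongr
      _ = (d i : ℝ) ^ s * (L : ℝ) ^ (1 - s) := by
          rw [← Real.rpow_add hL0]; ring_nf
      _ ≤ _ := by
          refine mul_le_mul_of_nonneg_left ?_ (by positivity)
          exact Real.rpow_le_rpow_of_nonpos (by linarith) hLR (by linarith)
  · simp only [hij, if_false]
    have hGG : (∑ σ : PM (Stubs d), ((cmEdges d σ i j - 1 : ℕ) : ℝ))
        ≤ 4 * ((d i : ℝ) * d j / L) ^ 2 * C := by
      have h := sumGG_le d i j hij
      have h0 : ∑ σ : PM (Stubs d), (cmEdges d σ i j - 1) ≤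
          ∑ σ : PM (Stubs d), cmEdges d σ i j * (cmEdges d σ i j - 1) := by
        refine Finset.sum_le_sum fun σ _ => ?_
        rcases Nat.eq_zero_or_pos (cmEdges d σ i j) with h0 | h0
        · simp [h0]
        · exact Nat.le_mul_of_pos_left _ h0
      have h' : ((L:ℝ) - 1) * ((L:ℝ) - 3) * ∑ σ : PM (Stubs d), ((cmEdges d σ i j - 1 : ℕ) : ℝ)
          ≤ (d i * d j) ^ 2 * C := by
        have h2 : ((L - 1 : ℕ):ℝ) = (L:ℝ) - 1 := by
          rw [Nat.cast_sub (by omega)]; simp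
        have h3 : ((L - 3 : ℕ):ℝ) = (L:ℝ) - 3 := by
          rw [Nat.cast_sub (by omega)]; simp
        rw [← h2, ← h3, hC]; exact_mod_cast (Nat.mul_le_mul_left _ h0).trans h
      have h3 : 0 ≤ ∑ σ : PM (Stubs d), ((cmEdges d σ i j - 1 : ℕ) : ℝ) :=
        Finset.sum_nonneg fun _ _ => Nat.cast_nonneg _
      rw [show 4 * ((d i : ℝ) * d j / L) ^ 2 * C = (4 * ((d i * d j) ^ 2 * C)) / L ^ 2 by ring,
        le_div_iff₀ (by positivity)]
      have h4 : (L:ℝ) ^ 2 ≤ 4 * (((L:ℝ) - 1) * ((L:ℝ) - 3)) := by nlinarith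
      nlinarith [mul_le_mul_of_nonneg_right h4 h3]
    have hG' : (∑ σ : PM (Stubs d), ((cmEdges d σ i j - 1 : ℕ) : ℝ))
        ≤ 2 * ((d i : ℝ) * d j / L) * C := by
      refine le_trans (Finset.sum_le_sum fun σ _ => ?_) hG
      exact_mod_cast Nat.sub_le _ _
    have hx0 : 0 ≤ (d i : ℝ) * d j / L := by positivity
    rcases hC0.eq_or_lt with hc | hc
    · rw [← hc] at hG' ⊢; simpa using hG'
    have hI := interp ((d i : ℝ) * d j / L)
      ((∑ σ : PM (Stubs d), ((cmEdges d σ i j - 1 : ℕ) : ℝ)) / C) s hx0 hs1 hs2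
      (by rw [div_le_iff₀ hc]; exact hG') (by rw [div_le_iff₀ hc]; exact hGG)
    rw [div_le_iff₀ hc] at hI
    refine hI.trans (mul_le_mul_of_nonneg_right ?_ hC0)
    refine mul_le_mul_of_nonneg_left ?_ (by norm_num)
    rw [Real.div_rpow (by positivity) hL0.le, Real.mul_rpow (by positivity) (by positivity),
      div_eq_mul_inv, ← Real.rpow_neg hL0.le]
    refine mul_le_mul_of_nonneg_left ?_ (by positivity)
    exact Real.rpow_le_rpow_of_nonpos (by linarith) hLR (by linarith)

lemma markov (b B : ℝ) (hb : 0 < b) (F : PM (Stubs d) → ℕ)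
    (h : ((∑ σ : PM (Stubs d), F σ : ℕ) : ℝ) ≤ B * Nat.card (PM (Stubs d))) :
    uniformMatching d {σ : Matching d | b < F σ} ≤ ENNReal.ofReal (B / b) := by
  classical
  set S : Finset (PM (Stubs d)) := Finset.univ.filter (fun σ => b < F σ) with hS
  have hcount : (Measure.count : Measure (Matching d)) {σ : Matching d | b < F σ} = (S.card : ℝ≥0∞) := by
    have : {σ : Matching d | b < F σ} = (show Set (Matching d) from (S : Set (PM (Stubs d)))) := by
      ext σ
      simp [hS]
      rfl
    rw [this]
    exact Measure.count_apply_finset' (s := (show Finset (Matching d) from S)) (by trivial)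
  unfold uniformMatching
  rw [Measure.smul_apply, hcount, smul_eq_mul]
  have hC : (Nat.card (Matching d)) = Nat.card (PM (Stubs d)) := rfl
  rw [hC]
  rcases Nat.eq_zero_or_pos (Nat.card (PM (Stubs d))) with h0 | h0
  · have : S.card = 0 := by
      have h1 : S.card ≤ Fintype.card (PM (Stubs d)) := Finset.card_le_univ _
      rw [← Nat.card_eq_fintype_card] at h1
      omega
    simp [this]
  have h0' : (0:ℝ) < Nat.card (PM (Stubs d)) := by exact_mod_cast h0
  have h1 : (S.card : ℝ) * b ≤ B * Nat.card (PM (Stubs d)) := by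
    refine le_trans ?_ h
    rw [Nat.cast_sum]
    calc (S.card : ℝ) * b = ∑ σ ∈ S, b := by simp
      _ ≤ ∑ σ ∈ S, (F σ : ℝ) := Finset.sum_le_sum fun σ hσ => by
          simp only [hS, Finset.mem_filter] at hσ
          exact hσ.2.le
      _ ≤ _ := Finset.sum_le_sum_of_subset_of_nonneg (Finset.subset_univ _)
          fun _ _ _ => Nat.cast_nonneg _
  rw [← ENNReal.ofReal_natCast, ← ENNReal.ofReal_natCast, ← ENNReal.ofReal_inv_of_pos h0',
    ← ENNReal.ofReal_mul (by positivity)]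
  apply ENNReal.ofReal_le_ofReal
  rw [inv_mul_le_iff₀ h0', ← mul_div_assoc, le_div_iff₀ hb]
  linarith

lemma uniform_le_one (S : Set (Matching d)) : uniformMatching d S ≤ 1 := by
  have := (measure_mono (Set.subset_univ S)).trans
    (show uniformMatching d Set.univ ≤ 1 from ?_)
  · exact this
  unfold uniformMatching
  rw [Measure.smul_apply, Measure.count_univ, smul_eq_mul]
  have : Fintype (Matching d) := inferInstanceAs (Fintype (PM (Stubs d)))
  rw [ENat.card_eq_coe_fintype_card, Nat.card_eq_fintype_card]
  exact ENNReal.inv_mul_le_one _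

end Sums

section Deterministic

variable {n : ℕ} (d : Fin n → ℕ) (g : Fin n → Fin n → ℕ)

/-- Number of nodes of degree `k`. -/
noncomputable def Nk (k : ℕ) : ℝ := ∑ i, if d i = k then (1 : ℝ) else 0

/-- Numerator of the ANND. -/
noncomputable def numA (k : ℕ) : ℝ :=
  ∑ i, if d i = k then ∑ j, (g i j : ℝ) * d j else 0

lemma tsum_joint (k : ℕ) :
    (∑' l : ℕ, jointDens d g k l * (l : ℝ)) = numA d g k / degSum d := by
  unfold jointDens numA
  have h1 : ∀ l : ℕ, (∑ i, ∑ j, if d i = k ∧ d j = l then (g i j : ℝ) else 0) / (degSum d : ℝ) * l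
      = ∑ i, ∑ j, (if l = d j then (if d i = k then (g i j : ℝ) * d j / degSum d else 0) else 0) := by
    intro l
    rw [Finset.sum_div, Finset.sum_mul]
    refine Finset.sum_congr rfl fun i _ => ?_
    rw [Finset.sum_div, Finset.sum_mul]
    refine Finset.sum_congr rfl fun j _ => ?_
    by_cases h1 : d i = k <;> by_cases h2 : l = d j
    · subst h2; simp [h1]; ring
    · simp [h2, Ne.symm h2]
    · simp [h1]
    · simp [h1]
  simp_rw [h1]
  have hs : ∀ i j, HasSum (fun l : ℕ => if l = d j then
      (if d i = k then (g i j : ℝ) * d j / degSum d else 0) else 0)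
      (if d i = k then (g i j : ℝ) * d j / degSum d else 0) := fun i j => hasSum_ite_eq _ _
  rw [(hasSum_sum fun i _ => hasSum_sum fun j _ => hs i j).tsum_eq, Finset.sum_div]
  refine Finset.sum_congr rfl fun i _ => ?_
  split_ifs
  · rw [Finset.sum_div]
  · simp

lemma ANND_eq (k : ℕ) (hk : 1 ≤ k) (hN : 0 < Nk d k) :
    ANND d g k = numA d g k / (k * Nk d k) := by
  have hn : 0 < n := by
    rcases Nat.eq_zero_or_pos n with h | h
    · subst h; simp [Nk] at hN
    · exact h
  have hL : (0:ℝ) < degSum d := by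
    by_contra hcon
    have h0 : degSum d = 0 := by
      have : ¬ 0 < degSum d := fun h => hcon (by exact_mod_cast h)
      omega
    have h1 : ∀ i, d i = 0 := by
      intro i
      exact (Finset.sum_eq_zero_iff.mp h0) i (Finset.mem_univ i)
    have : Nk d k = 0 := by
      unfold Nk
      refine Finset.sum_eq_zero fun i _ => ?_
      rw [if_neg]; rw [h1]; omega
    linarith
  unfold ANND
  have he : empDens d k = Nk d k / n := rfl
  have hsb : empSB d k = k * Nk d k / degSum d := by
    unfold empSB Nk
    rw [Finset.mul_sum]
    simp
  rw [if_pos (by rw [he]; positivity), tsum_joint, hsb]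
  have : (0:ℝ) < k := by exact_mod_cast hk
  field_simp

lemma erase_le (i j : Fin n) : erase g i j ≤ g i j := by
  unfold erase; split_ifs <;> omega

lemma er_add (i : Fin n) : er g i + eraseDeg g i = ∑ j, g i j := by
  unfold er eraseDeg
  rw [← Finset.sum_add_distrib]
  exact Finset.sum_congr rfl fun j _ => Nat.sub_add_cancel (erase_le g i j)

lemma Nk_diff (hrow : ∀ i, ∑ j, g i j = d i) (k : ℕ) :
    |Nk (eraseDeg g) k - Nk d k| ≤ ((∑ i, er g i : ℕ) : ℝ) := by
  unfold Nk
  rw [← Finset.sum_sub_distrib]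
  refine (Finset.abs_sum_le_sum_abs _ _).trans ?_
  push_cast
  refine Finset.sum_le_sum fun i _ => ?_
  have h := er_add g i
  rw [hrow] at h
  rcases Nat.eq_zero_or_pos (er g i) with h0 | h0
  · have : eraseDeg g i = d i := by omega
    simp [this]
  · have h1 : (1:ℝ) ≤ er g i := by exact_mod_cast h0
    refine le_trans ?_ h1
    split_ifs <;> norm_num

lemma numA_diff (hrow : ∀ i, ∑ j, g i j = d i) (hcol : ∀ j, ∑ i, g i j ≤ d j)
    (M : ℝ) (hM0 : 0 ≤ M) (hM : ∀ i, (d i : ℝ) ≤ M) (k : ℕ) :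
    |numA (eraseDeg g) (erase g) k - numA d g k| ≤ (k + 1) * M * ((∑ i, er g i : ℕ) : ℝ) := by
  have hle : ∀ i, eraseDeg g i ≤ d i := by
    intro i
    have h := er_add g i
    rw [hrow] at h
    omega
  have hterm : ∀ i, |(if eraseDeg g i = k then ∑ j, (erase g i j : ℝ) * eraseDeg g j else 0)
      - (if d i = k then ∑ j, (g i j : ℝ) * d j else 0)|
      ≤ ∑ j, (g i j : ℝ) * er g j + k * M * er g i := by
    intro i
    have h := er_add g i
    rw [hrow] at h
    have hpos1 : 0 ≤ ∑ j, (g i j : ℝ) * er g j :=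
      Finset.sum_nonneg fun _ _ => by positivity
    rcases Nat.eq_zero_or_pos (er g i) with h0 | h0
    · have hd : eraseDeg g i = d i := by omega
      rw [hd]
      have hz : ∀ j, erase g i j = g i j := by
        intro j
        have := (Finset.sum_eq_zero_iff.mp h0) j (Finset.mem_univ j)
        have := erase_le g i j
        omega
      split_ifs
      · rw [← Finset.sum_sub_distrib, h0]
        simp only [Nat.cast_zero, mul_zero, add_zero]
        refine (Finset.abs_sum_le_sum_abs _ _).trans (Finset.sum_le_sum fun j _ => ?_)
        rw [hz, ← mul_sub, abs_mul, abs_of_nonneg (by positivity : (0:ℝ) ≤ g i j)]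
        refine mul_le_mul_of_nonneg_left ?_ (by positivity)
        have hj := er_add g j
        rw [hrow] at hj
        have : (d j : ℝ) = er g j + eraseDeg g j := by exact_mod_cast hj.symm
        rw [this]
        simp
      · simp; positivity
    · have h1 : (1:ℝ) ≤ er g i := by exact_mod_cast h0
      have hkM : 0 ≤ k * M := by positivity
      have b1 : (if d i = k then ∑ j, (g i j : ℝ) * d j else 0) ≤ k * M := by
        split_ifs with hd
        · calc ∑ j, (g i j : ℝ) * d j ≤ ∑ j, (g i j : ℝ) * M :=
                Finset.sum_le_sum fun j _ => mul_le_mul_of_nonneg_left (hM j) (by positivity)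
            _ = k * M := by
                rw [← Finset.sum_mul, ← hd, ← hrow i]; push_cast; rfl
        · exact hkM
      have b1' : 0 ≤ (if d i = k then ∑ j, (g i j : ℝ) * d j else 0) := by
        split_ifs
        · positivity
        · exact le_rfl
      have b2 : (if eraseDeg g i = k then ∑ j, (erase g i j : ℝ) * eraseDeg g j else 0)
          ≤ k * M := by
        split_ifs with hd
        · calc ∑ j, (erase g i j : ℝ) * eraseDeg g j ≤ ∑ j, (erase g i j : ℝ) * M :=
                Finset.sum_le_sum fun j _ => mul_le_mul_of_nonneg_left
                  (le_trans (by exact_mod_cast hle j) (hM j)) (by positivity)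
            _ = k * M := by
                rw [← Finset.sum_mul, ← hd]; unfold eraseDeg; push_cast; rfl
        · exact hkM
      have b2' : 0 ≤ (if eraseDeg g i = k then ∑ j, (erase g i j : ℝ) * eraseDeg g j else 0) := by
        split_ifs
        · positivity
        · exact le_rfl
      have h2 : k * M ≤ k * M * er g i := le_mul_of_one_le_right hkM h1
      rw [abs_le]
      constructor <;> linarith
  unfold numA
  rw [← Finset.sum_sub_distrib]
  refine (Finset.abs_sum_le_sum_abs _ _).trans ((Finset.sum_le_sum fun i _ => hterm i).trans ?_)
  rw [Finset.sum_add_distrib, Finset.sum_comm, ← Finset.mul_sum]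
  have h1 : ∑ j, ∑ i, (g i j : ℝ) * er g j ≤ M * ∑ j, (er g j : ℝ) := by
    rw [Finset.mul_sum]
    refine Finset.sum_le_sum fun j _ => ?_
    rw [← Finset.sum_mul]
    refine mul_le_mul_of_nonneg_right (le_trans ?_ (hM j)) (by positivity)
    exact_mod_cast hcol j
  push_cast
  linarith

lemma numA_le (hrow : ∀ i, ∑ j, g i j = d i)
    (M : ℝ) (hM : ∀ i, (d i : ℝ) ≤ M) (k : ℕ) :
    numA d g k ≤ k * M * Nk d k := by
  unfold numA Nk
  rw [Finset.mul_sum]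
  refine Finset.sum_le_sum fun i _ => ?_
  split_ifs with hd
  · calc ∑ j, (g i j : ℝ) * d j ≤ ∑ j, (g i j : ℝ) * M :=
          Finset.sum_le_sum fun j _ => mul_le_mul_of_nonneg_left (hM j) (by positivity)
      _ = k * M * 1 := by
          rw [← Finset.sum_mul, ← hd, ← hrow i]; push_cast; ring
  · simp

lemma ANND_diff (hrow : ∀ i, ∑ j, g i j = d i) (hcol : ∀ j, ∑ i, g i j ≤ d j)
    (M : ℝ) (hM0 : 0 ≤ M) (hM : ∀ i, (d i : ℝ) ≤ M) (k : ℕ) (hk : 1 ≤ k)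
    (hN : 0 < Nk d k) (hN' : 0 < Nk (eraseDeg g) k) :
    |ANND (eraseDeg g) (erase g) k - ANND d g k|
      ≤ 3 * M * ((∑ i, er g i : ℕ) : ℝ) / Nk (eraseDeg g) k := by
  rw [ANND_eq _ _ k hk hN, ANND_eq _ _ k hk hN']
  have h1 := numA_diff d g hrow hcol M hM0 hM k
  have h2 := Nk_diff d g hrow k
  have h3 := numA_le d g hrow M hM k
  have h4 : 0 ≤ numA d g k := by
    unfold numA
    refine Finset.sum_nonneg fun i _ => ?_
    split_ifs
    · positivity
    · exact le_rfl
  have hE : (0:ℝ) ≤ ((∑ i, er g i : ℕ) : ℝ) := Nat.cast_nonneg _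
  generalize ((∑ i, er g i : ℕ) : ℝ) = E at *
  generalize numA (eraseDeg g) (erase g) k = A' at *
  generalize numA d g k = A at *
  generalize Nk (eraseDeg g) k = N' at *
  generalize Nk d k = N at *
  have hkR : (1:ℝ) ≤ k := by exact_mod_cast hk
  have hk0 : (0:ℝ) < k := by linarith
  have e : A' / (k * N') - A / (k * N) = (A' - A) / (k * N') - A / (k * N) * (N' - N) / N' := by
    field_simp; ring
  rw [e]
  refine (abs_sub _ _).trans ?_
  rw [abs_div, abs_div, abs_of_pos (by positivity : (0:ℝ) < k * N'),
    abs_mul (A / (k * N)), abs_of_pos hN', abs_of_nonneg (by positivity : 0 ≤ A / (k * N))]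
  have t1 : |A' - A| / (k * N') ≤ 2 * M * E / N' := by
    rw [div_le_div_iff₀ (by positivity) hN']
    have : (k + 1) * M * E ≤ 2 * M * E * k := by
      have : 0 ≤ M * E * (k - 1) := by
        have := mul_nonneg hM0 hE
        nlinarith
      linarith
    nlinarith
  have t2 : A / (k * N) * |N' - N| / N' ≤ M * E / N' := by
    refine div_le_div_of_nonneg_right ?_ hN'.le
    refine mul_le_mul ?_ h2 (abs_nonneg _) hM0
    rw [div_le_iff₀ (by positivity)]
    linarith
  calc _ ≤ 2 * M * E / N' + M * E / N' := add_le_add t1 t2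
    _ = _ := by ring

lemma cm_row (σ : PM (Stubs d)) (i : Fin n) : ∑ j, cmEdges d σ i j = d i := by
  unfold cmEdges
  rw [← Finset.card_eq_sum_card_fiberwise (s := Finset.univ)
    (f := fun s : Fin (d i) => (σ.1 ⟨i, s⟩).1) (t := Finset.univ) (by intro σ _; simp)]
  simp

lemma cm_col (σ : PM (Stubs d)) (j : Fin n) : ∑ i, cmEdges d σ i j ≤ d j := by
  have h : ∀ i, cmEdges d σ i j = ∑ s : Fin (d i), if (σ.1 ⟨i, s⟩).1 = j then 1 else 0 := by
    intro i
    unfold cmEdges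
    rw [Finset.card_filter]
  simp_rw [h]
  have h2 := Fintype.sum_sigma (fun s : Stubs d => if (σ.1 s).1 = j then 1 else 0)
  rw [← h2, Equiv.sum_comp σ.1 (fun s : Stubs d => if s.1 = j then 1 else 0),
    Fintype.sum_sigma, Finset.sum_eq_single j]
  · simp
  · intro i _ hi
    simp [hi]
  · simp

end Deterministic

section Moments

lemma l_bound (l : ℝ → ℝ) (hsv : SlowlyVarying l) (hmono : EventuallyMonotone l)
    (hpos : ∀ k : ℕ, 1 ≤ k → 0 ≤ l k) (η : ℝ) (hη : 0 < η) :
    ∃ C : ℝ, ∀ k : ℕ, 1 ≤ k → l k ≤ C * (k : ℝ) ^ η := by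
  have aux : ∀ (K0 : ℕ) (B : ℝ), 0 ≤ B → (∀ k : ℕ, 1 ≤ k → K0 ≤ k → l k ≤ B * (k:ℝ) ^ η) →
      ∃ C : ℝ, ∀ k : ℕ, 1 ≤ k → l k ≤ C * (k : ℝ) ^ η := by
    intro K0 B hB h
    have hS : 0 ≤ ∑ j ∈ Finset.range K0, |l j| := Finset.sum_nonneg fun _ _ => abs_nonneg _
    refine ⟨B + ∑ j ∈ Finset.range K0, |l j|, fun k hk => ?_⟩
    have h1 : (1:ℝ) ≤ (k:ℝ) ^ η := Real.one_le_rpow (by exact_mod_cast hk) hη.le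
    rcases le_or_gt K0 k with h2 | h2
    · have := h k hk h2
      nlinarith
    · have h3 : |l k| ≤ ∑ j ∈ Finset.range K0, |l j| :=
        Finset.single_le_sum (f := fun j : ℕ => |l j|) (fun _ _ => abs_nonneg _)
          (Finset.mem_range.mpr h2)
      have := le_abs_self (l k)
      nlinarith
  obtain ⟨K, hK | hK⟩ := hmono
  · have h2 := hsv 2 (by norm_num)
    have hlt : (1:ℝ) < (2:ℝ) ^ η := Real.one_lt_rpow (by norm_num) hη
    have ev := (h2.eventually (lt_mem_nhds (show (0:ℝ) < 1 by norm_num))).and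
      (h2.eventually (gt_mem_nhds hlt))
    obtain ⟨X, hX⟩ := eventually_atTop.mp ev
    obtain ⟨j0, hj0⟩ := pow_unbounded_of_one_lt (max X K) (show (1:ℝ) < 2 by norm_num)
    have hge : ∀ m : ℕ, max X K ≤ (2:ℝ) ^ (j0 + m) := by
      intro m
      refine hj0.le.trans ?_
      exact pow_le_pow_right₀ (by norm_num) (by omega)
    have hl0 : ∀ m : ℕ, 0 ≤ l ((2:ℝ) ^ m) := by
      intro m
      have := hpos (2 ^ m) Nat.one_le_two_pow
      push_cast at this
      exact this
    have hstep : ∀ m : ℕ, l ((2:ℝ) ^ (j0 + m)) ≤ (2:ℝ) ^ (η * m) * l ((2:ℝ) ^ j0) := by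
      intro m
      induction m with
      | zero => simp
      | succ m ih =>
        have hx := hX ((2:ℝ) ^ (j0 + m)) ((le_max_left _ _).trans (hge m))
        have hp : 0 < l ((2:ℝ) ^ (j0 + m)) := by
          rcases (hl0 (j0 + m)).eq_or_lt with h | h
          · rw [← h] at hx; simp at hx
          · exact h
        have h3 := hx.2
        rw [div_lt_iff₀ hp] at h3
        have e : (2:ℝ) * 2 ^ (j0 + m) = 2 ^ (j0 + (m + 1)) := by
          rw [← add_assoc, pow_succ]; ring
        rw [e] at h3
        calc _ ≤ 2 ^ η * l ((2:ℝ) ^ (j0 + m)) := h3.le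
          _ ≤ 2 ^ η * ((2:ℝ) ^ (η * m) * l ((2:ℝ) ^ j0)) := by gcongr
          _ = _ := by
            rw [← mul_assoc, ← Real.rpow_add (by norm_num)]
            push_cast
            ring_nf
    refine aux (2 ^ j0) (2 ^ η * l ((2:ℝ) ^ j0)) (by have := hl0 j0; positivity) ?_
    intro k hk hkj
    set j := Nat.log 2 k with hj
    have hjj : j0 ≤ j := by
      rw [hj]
      exact Nat.le_log_of_pow_le (by norm_num) hkj
    have hlo : 2 ^ j ≤ k := Nat.pow_log_le_self 2 (by omega)
    have hhi : k < 2 ^ (j + 1) := Nat.lt_pow_succ_log_self (by norm_num) k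
    have hloR : (2:ℝ) ^ j ≤ k := by exact_mod_cast hlo
    have hhiR : (k:ℝ) ≤ (2:ℝ) ^ (j + 1) := by exact_mod_cast hhi.le
    obtain ⟨m, hm⟩ := Nat.exists_eq_add_of_le hjj
    have hKk : K ≤ k := (le_max_right X K).trans ((hge m).trans (by rw [← hm]; exact hloR))
    have hl1 : l k ≤ l ((2:ℝ) ^ (j + 1)) := hK hKk (hKk.trans hhiR) hhiR
    have hl2 := hstep (m + 1)
    rw [← add_assoc, ← hm] at hl2
    refine hl1.trans (hl2.trans ?_)
    have e1 : (2:ℝ) ^ (η * ((m + 1 : ℕ) : ℝ)) ≤ 2 ^ η * (k:ℝ) ^ η := by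
      have : (2:ℝ) ^ (η * ((m + 1 : ℕ) : ℝ)) = 2 ^ η * ((2:ℝ) ^ m) ^ η := by
        rw [← Real.rpow_natCast, ← Real.rpow_mul (by norm_num), ← Real.rpow_add (by norm_num)]
        push_cast
        ring_nf
      rw [this]
      gcongr
      refine le_trans ?_ hloR
      exact pow_le_pow_right₀ (by norm_num) (by omega)
    calc _ ≤ 2 ^ η * (k:ℝ) ^ η * l ((2:ℝ) ^ j0) := mul_le_mul_of_nonneg_right e1 (hl0 j0)
      _ = _ := by ring
  · refine aux (max 1 ⌈K⌉₊) (l ((max 1 ⌈K⌉₊ : ℕ) : ℝ)) (hpos _ (le_max_left _ _)) ?_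
    intro k hk hkK
    have hK1 : K ≤ ((max 1 ⌈K⌉₊ : ℕ) : ℝ) :=
      (Nat.le_ceil K).trans (by exact_mod_cast le_max_right _ _)
    have hkR : ((max 1 ⌈K⌉₊ : ℕ) : ℝ) ≤ k := by exact_mod_cast hkK
    have h1 : l k ≤ l ((max 1 ⌈K⌉₊ : ℕ) : ℝ) := hK hK1 (hK1.trans hkR) hkR
    have h2 : (1:ℝ) ≤ (k:ℝ) ^ η := Real.one_le_rpow (by exact_mod_cast hk) hη.le
    have h3 := hpos (max 1 ⌈K⌉₊) (le_max_left _ _)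
    nlinarith

lemma moment_lt_top (ν : Measure ℕ) [IsProbabilityMeasure ν] (f : ℕ → ℝ)
    (hf : ∀ k, f k = (ν {k}).toReal) (γ : ℝ)
    (l : ℝ → ℝ) (hsv : SlowlyVarying l) (hmono : EventuallyMonotone l)
    (hreg : ∀ k : ℕ, 1 ≤ k → f k = l k * (k : ℝ) ^ (-γ - 1)) (s : ℝ) (hs0 : 0 < s) (hs : s < γ) :
    ∫⁻ x, ENNReal.ofReal ((x:ℝ) ^ s) ∂ν < ∞ := by
  have hf0 : ∀ k, 0 ≤ f k := fun k => by rw [hf]; exact ENNReal.toReal_nonneg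
  have hpos : ∀ k : ℕ, 1 ≤ k → 0 ≤ l k := by
    intro k hk
    have h1 := hf0 k
    rw [hreg k hk] at h1
    have h2 : (0:ℝ) < (k:ℝ) ^ (-γ - 1) := Real.rpow_pos_of_pos (by exact_mod_cast hk) _
    exact nonneg_of_mul_nonneg_left h1 h2
  obtain ⟨C, hC⟩ := l_bound l hsv hmono hpos ((γ - s) / 2) (by linarith)
  have hsum : Summable (fun k : ℕ => (k:ℝ) ^ s * f k) := by
    have hbase : Summable (fun k : ℕ => C * (k:ℝ) ^ ((s - γ) / 2 - 1)) :=
      (Real.summable_nat_rpow.mpr (by linarith)).mul_left C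
    refine Summable.of_nonneg_of_le (fun k => mul_nonneg (by positivity) (hf0 k)) ?_ (hbase.add
      (summable_zero))
    intro k
    rcases Nat.eq_zero_or_pos k with h0 | h0
    · subst h0
      rw [Nat.cast_zero, Real.zero_rpow hs0.ne', Real.zero_rpow (by linarith)]
      simp
    · have hk0 : (0:ℝ) < k := by exact_mod_cast h0
      rw [hreg k h0, add_zero]
      calc (k:ℝ) ^ s * (l k * (k:ℝ) ^ (-γ - 1))
          ≤ (k:ℝ) ^ s * ((C * (k:ℝ) ^ ((γ - s) / 2)) * (k:ℝ) ^ (-γ - 1)) := by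
            gcongr; exact hC k h0
        _ = C * ((k:ℝ) ^ s * (k:ℝ) ^ ((γ - s) / 2) * (k:ℝ) ^ (-γ - 1)) := by ring
        _ = _ := by
            rw [← Real.rpow_add hk0, ← Real.rpow_add hk0]
            ring_nf
  rw [lintegral_countable']
  have e : ∀ a : ℕ, ENNReal.ofReal ((a:ℝ) ^ s) * ν {a} = ENNReal.ofReal ((a:ℝ) ^ s * f a) := by
    intro a
    rw [ENNReal.ofReal_mul (by positivity), hf, ENNReal.ofReal_toReal (measure_ne_top _ _)]
  simp_rw [e]
  exact hsum.tsum_ofReal_lt_top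

end Moments

section Prob

variable (ν : Measure ℕ) [IsProbabilityMeasure ν]

/-- The product law. -/
noncomputable abbrev PP (n : ℕ) : Measure (Fin n → ℕ) := Measure.pi fun _ : Fin n => ν

lemma ae_pos (hzero : ν {0} = 0) (n : ℕ) : ∀ᵐ x ∂(PP ν n), ∀ i, 1 ≤ x i := by
  rw [ae_all_iff]
  intro i
  have h : ∀ᵐ y ∂ν, 1 ≤ y := by
    rw [ae_iff]
    have : {y : ℕ | ¬ 1 ≤ y} = {0} := by ext; simp
    rw [this, hzero]
  exact (measurePreserving_eval (fun _ : Fin n => ν) i).quasiMeasurePreserving.ae h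

lemma lint_one (n : ℕ) (i : Fin n) (w : ℕ → ℝ≥0∞) :
    ∫⁻ x, w (x i) ∂(PP ν n) = ∫⁻ y, w y ∂ν :=
  (measurePreserving_eval (fun _ : Fin n => ν) i).lintegral_comp (measurable_of_countable w)

lemma lint_two (n : ℕ) (i j : Fin n) (hij : i ≠ j) (w : ℕ → ℝ≥0∞) :
    ∫⁻ x, w (x i) * w (x j) ∂(PP ν n) = (∫⁻ y, w y ∂ν) ^ 2 := by
  have hw := measurable_of_countable w
  have hind := ProbabilityTheory.iIndepFun_pi (μ := fun _ : Fin n => ν) (X := fun _ => w)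
    (fun _ => hw.aemeasurable)
  have := ProbabilityTheory.lintegral_mul_eq_lintegral_mul_lintegral_of_indepFun
    (μ := PP ν n) (f := fun x => w (x i)) (g := fun x => w (x j))
    (hw.comp (measurable_pi_apply i)) (hw.comp (measurable_pi_apply j)) (hind.indepFun hij)
  simp only [Pi.mul_apply] at this
  rw [this, lint_one, lint_one, sq]

lemma lint_prod (n : ℕ) (w : ℕ → ℝ≥0∞) :
    ∫⁻ x, ∏ i, w (x i) ∂(PP ν n) = (∫⁻ y, w y ∂ν) ^ n := by
  have hw := measurable_of_countable w
  have hind := ProbabilityTheory.iIndepFun_pi (μ := fun _ : Fin n => ν) (X := fun _ => w)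
    (fun _ => hw.aemeasurable)
  have := ProbabilityTheory.lintegral_prod_eq_prod_lintegral_of_indepFun
    (μ := PP ν n) Finset.univ (fun i (x : Fin n → ℕ) => w (x i)) hind
    (fun i => hw.comp (measurable_pi_apply i))
  rw [this]
  simp_rw [lint_one]
  simp

/-- Tail bound for the maximal degree. -/
lemma tail_max (s : ℝ) (hs : 0 < s) (n : ℕ) (b : ℝ) (hb : 0 < b) :
    PP ν n {x | ∃ i, b < 2 * (x i : ℝ)}
      ≤ n * ((∫⁻ y, ENNReal.ofReal ((y:ℝ) ^ s) ∂ν) / ENNReal.ofReal ((b / 2) ^ s)) := by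
  have h1 : {x : Fin n → ℕ | ∃ i, b < 2 * (x i : ℝ)}
      ⊆ ⋃ i : Fin n, {x | ENNReal.ofReal ((b / 2) ^ s) ≤ ENNReal.ofReal ((x i : ℝ) ^ s)} := by
    rintro x ⟨i, hi⟩
    refine Set.mem_iUnion.mpr ⟨i, ?_⟩
    refine ENNReal.ofReal_le_ofReal ?_
    exact Real.rpow_le_rpow (by positivity) (by linarith) hs.le
  refine (measure_mono h1).trans ((measure_iUnion_le _).trans ?_)
  rw [tsum_fintype]
  calc _ ≤ ∑ i : Fin n, (∫⁻ y, ENNReal.ofReal ((y:ℝ) ^ s) ∂ν) / ENNReal.ofReal ((b / 2) ^ s) := by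
        refine Finset.sum_le_sum fun i _ => ?_
        have := meas_ge_le_lintegral_div (μ := PP ν n)
          (f := fun x => ENNReal.ofReal ((x i : ℝ) ^ s)) (measurable_of_countable _).aemeasurable
          (ε := ENNReal.ofReal ((b / 2) ^ s)) (by simp; positivity) (by simp)
        rwa [lint_one ν n i (fun y => ENNReal.ofReal ((y:ℝ) ^ s))] at this
    _ = _ := by simp

/-- Few nodes of degree `k` is unlikely. -/
lemma tail_Nk (k : ℕ) (hk : 0 < ν {k}) :
    ∃ c : ℝ, 0 < c ∧ Tendsto (fun n : ℕ => PP ν n {x | Nk x k ≤ c * n}) atTop (nhds 0) := by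
  set p : ℝ := (ν {k}).toReal with hp
  have hp0 : 0 < p := ENNReal.toReal_pos hk.ne' (measure_ne_top _ _)
  have hp1 : p ≤ 1 := by
    have := ENNReal.toReal_mono (by simp) (prob_le_one (μ := ν) (s := {k}))
    simpa using this
  set w : ℕ → ℝ≥0∞ := fun y => ENNReal.ofReal (Real.exp (-(if y = k then 1 else 0))) with hw
  set r : ℝ := 1 - p + p * Real.exp (-1) with hr
  have he : Real.exp (-1) < 1 := by rw [Real.exp_lt_one_iff]; norm_num
  have he0 := Real.exp_pos (-1)
  have hr1 : r < 1 := by nlinarith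
  have hr0 : 0 < r := by nlinarith
  have h_lint : ∫⁻ y, w y ∂ν = ENNReal.ofReal r := by
    have hc : ν {k}ᶜ = ENNReal.ofReal (1 - p) := by
      rw [prob_compl_eq_one_sub (measurableSet_singleton k), ENNReal.ofReal_sub _ hp0.le, hp,
        ENNReal.ofReal_toReal (measure_ne_top _ _)]
      simp
    have hsplit := lintegral_add_compl w (measurableSet_singleton k) (μ := ν)
    rw [← hsplit]
    have e1 : ∫⁻ y in {k}, w y ∂ν = ENNReal.ofReal (p * Real.exp (-1)) := by
      rw [lintegral_singleton, ENNReal.ofReal_mul hp0.le, hp,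
        ENNReal.ofReal_toReal (measure_ne_top _ _), mul_comm]
      simp [hw]
    have e2 : ∫⁻ y in {k}ᶜ, w y ∂ν = ENNReal.ofReal (1 - p) := by
      rw [setLIntegral_congr_fun (g := fun _ => 1) (measurableSet_singleton k).compl]
      · simp [hc]
      · intro y hy
        have : y ≠ k := hy
        simp [hw, this]
    rw [e1, e2, ← ENNReal.ofReal_add (by positivity) (by linarith), hr]
    ring_nf
  -- choose c
  set c : ℝ := (1 - r) / 2 with hcdef
  have hc0 : 0 < c := by rw [hcdef]; linarith
  have hlt : Real.exp c * r < 1 := by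
    have h1 : r < Real.exp (-c) := by
      have := Real.add_one_le_exp (-c)
      linarith
    calc Real.exp c * r < Real.exp c * Real.exp (-c) := by
          exact mul_lt_mul_of_pos_left h1 (Real.exp_pos _)
      _ = 1 := by rw [← Real.exp_add]; simp
  refine ⟨c, hc0, ?_⟩
  have hb : ∀ n : ℕ, PP ν n {x | Nk x k ≤ c * n} ≤ ENNReal.ofReal ((Real.exp c * r) ^ n) := by
    intro n
    have hprod : ∀ x : Fin n → ℕ, ∏ i, w (x i) = ENNReal.ofReal (Real.exp (-(Nk x k))) := by
      intro x
      rw [hw, ← ENNReal.ofReal_prod_of_nonneg (fun _ _ => (Real.exp_pos _).le), ← Real.exp_sum]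
      unfold Nk
      rw [Finset.sum_neg_distrib]
    have hsub : {x : Fin n → ℕ | Nk x k ≤ c * n}
        ⊆ {x | ENNReal.ofReal (Real.exp (-(c * n))) ≤ ∏ i, w (x i)} := by
      intro x hx
      have hx' : Nk x k ≤ c * n := hx
      change ENNReal.ofReal (Real.exp (-(c * n))) ≤ ∏ i, w (x i)
      rw [hprod]
      apply ENNReal.ofReal_le_ofReal
      apply Real.exp_le_exp.mpr
      linarith
    refine (measure_mono hsub).trans ?_
    have := meas_ge_le_lintegral_div (μ := PP ν n)
          (f := fun x => ∏ i, w (x i)) (measurable_of_countable _).aemeasurable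
          (ε := ENNReal.ofReal (Real.exp (-(c * n)))) (by simp; positivity) (by simp)
    refine this.trans ?_
    rw [lint_prod, h_lint, ← ENNReal.ofReal_pow hr0.le, ← ENNReal.ofReal_div_of_pos (Real.exp_pos _)]
    apply ENNReal.ofReal_le_ofReal
    rw [Real.exp_neg, div_inv_eq_mul, mul_pow, ← Real.exp_nat_mul, mul_comm c, mul_comm]
  refine tendsto_of_tendsto_of_tendsto_of_le_of_le tendsto_const_nhds ?_ (fun _ => zero_le) hb
  have := ENNReal.tendsto_ofReal (tendsto_pow_atTop_nhds_zero_of_lt_one (by positivity) hlt)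
  simpa using this

lemma parityFix_le {n : ℕ} (x : Fin n → ℕ) (hx : ∀ i, 1 ≤ x i) (i : Fin n) :
    parityFix n x i ≤ 2 * x i := by
  unfold parityFix
  have := hx i
  split_ifs <;> omega

lemma le_parityFix {n : ℕ} (x : Fin n → ℕ) (i : Fin n) : x i ≤ parityFix n x i := by
  unfold parityFix
  split_ifs <;> omega

lemma Nk_parityFix {n : ℕ} (x : Fin n → ℕ) (k : ℕ) : Nk x k - 1 ≤ Nk (parityFix n x) k := by
  unfold Nk
  have h : ∀ i : Fin n, (if x i = k then (1:ℝ) else 0) ≤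
      (if parityFix n x i = k then (1:ℝ) else 0) + (if (i:ℕ) = n - 1 then 1 else 0) := by
    intro i
    by_cases hi : (i:ℕ) = n - 1
    · simp only [hi, if_true]
      split_ifs <;> norm_num
    · have : parityFix n x i = x i := by
        unfold parityFix; simp [hi]
      rw [this]; simp [hi]
  have h1 := Finset.sum_le_sum fun i (_ : i ∈ Finset.univ) => h i
  rw [Finset.sum_add_distrib] at h1
  have h2 : ∑ i : Fin n, (if (i:ℕ) = n - 1 then (1:ℝ) else 0) ≤ 1 := by
    rw [Finset.sum_boole]
    have : (Finset.univ.filter (fun i : Fin n => (i:ℕ) = n - 1)).card ≤ 1 := by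
      rw [Finset.card_le_one]
      intro a ha b hb
      simp only [Finset.mem_filter, Finset.mem_univ, true_and] at ha hb
      exact Fin.ext (ha.trans hb.symm)
    exact_mod_cast this
  linarith

lemma le_degSum_parityFix {n : ℕ} (x : Fin n → ℕ) (hx : ∀ i, 1 ≤ x i) :
    n ≤ degSum (parityFix n x) := by
  unfold degSum
  calc n = ∑ i : Fin n, 1 := by simp
    _ ≤ _ := Finset.sum_le_sum fun i _ => (hx i).trans (le_parityFix x i)

lemma lint_erBound (hzero : ν {0} = 0) (s : ℝ) (hs : 0 < s)
    (hm : ∫⁻ y, ENNReal.ofReal ((y:ℝ) ^ s) ∂ν < ∞) (n : ℕ) (hn : 1 ≤ n) (b : ℝ) (hb : 0 < b) :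
    ∫⁻ x, ENNReal.ofReal (erBound (parityFix n x) s / b) ∂(PP ν n)
      ≤ ENNReal.ofReal ((2 * (2 ^ s * (∫⁻ y, ENNReal.ofReal ((y:ℝ) ^ s) ∂ν).toReal) +
          4 * (2 ^ s * (∫⁻ y, ENNReal.ofReal ((y:ℝ) ^ s) ∂ν).toReal) ^ 2)
            * (n:ℝ) ^ (2 - s) / b) := by
  set m := ∫⁻ y, ENNReal.ofReal ((y:ℝ) ^ s) ∂ν with hmdef
  have hmr : m = ENNReal.ofReal m.toReal := (ENNReal.ofReal_toReal hm.ne).symm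
  set μ := m.toReal with hμ
  have hμ0 : 0 ≤ μ := ENNReal.toReal_nonneg
  have hn0 : (0:ℝ) < n := by exact_mod_cast hn
  set W : ℕ → ℝ≥0∞ := fun y => ENNReal.ofReal ((y:ℝ) ^ s) with hW
  set A : ℝ := 2 * 2 ^ s * (n:ℝ) ^ (1 - s) / b with hA
  set B : ℝ := 4 * (2 ^ s) ^ 2 * (n:ℝ) ^ (-s) / b with hB
  have hA0 : 0 ≤ A := by positivity
  have hB0 : 0 ≤ B := by positivity
  have hpt : ∀ᵐ x ∂(PP ν n), ENNReal.ofReal (erBound (parityFix n x) s / b) ≤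
      ∑ i, ∑ j, if i = j then ENNReal.ofReal A * W (x i)
        else ENNReal.ofReal B * (W (x i) * W (x j)) := by
    filter_upwards [ae_pos ν hzero n] with x hx
    have hr : erBound (parityFix n x) s / b ≤
        ∑ i, ∑ j, if i = j then A * (x i : ℝ) ^ s else B * ((x i : ℝ) ^ s * (x j : ℝ) ^ s) := by
      unfold erBound
      rw [Finset.sum_div]
      refine Finset.sum_le_sum fun i _ => ?_
      rw [Finset.sum_div]
      refine Finset.sum_le_sum fun j _ => ?_
      have hd : ∀ i, (parityFix n x i : ℝ) ^ s ≤ 2 ^ s * (x i : ℝ) ^ s := by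
        intro i
        rw [← Real.mul_rpow (by norm_num) (by positivity)]
        refine Real.rpow_le_rpow (by positivity) ?_ hs.le
        exact_mod_cast parityFix_le x hx i
      split_ifs
      · calc 2 * ((parityFix n x i : ℝ) ^ s * (n:ℝ) ^ (1 - s)) / b
            ≤ 2 * ((2 ^ s * (x i : ℝ) ^ s) * (n:ℝ) ^ (1 - s)) / b := by
              gcongr; exact hd i
          _ = _ := by rw [hA]; ring
      · calc 4 * ((parityFix n x i : ℝ) ^ s * (parityFix n x j : ℝ) ^ s * (n:ℝ) ^ (-s)) / b
            ≤ 4 * ((2 ^ s * (x i : ℝ) ^ s) * (2 ^ s * (x j : ℝ) ^ s) * (n:ℝ) ^ (-s)) / b := by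
              gcongr
              · exact hd i
              · exact hd j
          _ = _ := by rw [hB]; ring
    refine (ENNReal.ofReal_le_ofReal hr).trans (le_of_eq ?_)
    rw [ENNReal.ofReal_sum_of_nonneg (fun i _ => Finset.sum_nonneg fun j _ => by
      split_ifs <;> positivity)]
    refine Finset.sum_congr rfl fun i _ => ?_
    rw [ENNReal.ofReal_sum_of_nonneg (fun j _ => by split_ifs <;> positivity)]
    refine Finset.sum_congr rfl fun j _ => ?_
    split_ifs
    · rw [ENNReal.ofReal_mul hA0]
    · rw [ENNReal.ofReal_mul hB0, ENNReal.ofReal_mul (by positivity)]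
  refine (lintegral_mono_ae hpt).trans ?_
  rw [lintegral_finsetSum _ (fun i _ => measurable_of_countable _)]
  have hterm : ∀ i : Fin n, ∫⁻ x, (∑ j, if i = j then ENNReal.ofReal A * W (x i)
        else ENNReal.ofReal B * (W (x i) * W (x j))) ∂(PP ν n)
        ≤ ENNReal.ofReal (A * μ + n * (B * μ ^ 2)) := by
    intro i
    rw [lintegral_finsetSum _ (fun j _ => measurable_of_countable _)]
    have hj : ∀ j : Fin n, ∫⁻ x, (if i = j then ENNReal.ofReal A * W (x i)
        else ENNReal.ofReal B * (W (x i) * W (x j))) ∂(PP ν n)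
        ≤ (if i = j then ENNReal.ofReal (A * μ) else 0) + ENNReal.ofReal (B * μ ^ 2) := by
      intro j
      by_cases hij : i = j
      · simp only [hij, if_true]
        rw [lintegral_const_mul _ (measurable_of_countable _), lint_one ν n j W,
          ← hmdef, hmr, ← ENNReal.ofReal_mul hA0]
        exact le_self_add
      · simp only [hij, if_false]
        rw [lintegral_const_mul _ (measurable_of_countable _), lint_two ν n i j hij W,
          ← hmdef, hmr, ← ENNReal.ofReal_pow hμ0, ← ENNReal.ofReal_mul hB0, zero_add]
    refine (Finset.sum_le_sum fun j _ => hj j).trans (le_of_eq ?_)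
    rw [Finset.sum_add_distrib, Finset.sum_ite_eq, if_pos (Finset.mem_univ _),
      ENNReal.ofReal_add (by positivity) (by positivity),
      ENNReal.ofReal_mul (p := (n:ℝ)) (by positivity)]
    simp
  refine (Finset.sum_le_sum fun i _ => hterm i).trans (le_of_eq ?_)
  rw [Finset.sum_const, Finset.card_univ, Fintype.card_fin, nsmul_eq_mul,
    ← ENNReal.ofReal_natCast, ← ENNReal.ofReal_mul (by positivity)]
  congr 1
  have e1 : (n:ℝ) * (n:ℝ) ^ (1 - s) = (n:ℝ) ^ (2 - s) := by
    nth_rewrite 1 [← Real.rpow_one (n:ℝ)]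
    rw [← Real.rpow_add hn0]; ring_nf
  have e2 : (n:ℝ) * n * (n:ℝ) ^ (-s) = (n:ℝ) ^ (2 - s) := by
    rw [← sq, ← Real.rpow_natCast, ← Real.rpow_add hn0]; push_cast; ring_nf
  calc (n:ℝ) * (A * μ + n * (B * μ ^ 2))
      = 2 * 2 ^ s * μ / b * (n * (n:ℝ) ^ (1 - s)) +
        4 * (2 ^ s) ^ 2 * μ ^ 2 / b * (n * n * (n:ℝ) ^ (-s)) := by rw [hA, hB]; ring
    _ = _ := by rw [e1, e2]; ring

lemma cmLaw_apply (n : ℕ) (S : Set ((Fin n → ℕ) × (Fin n → Fin n → ℕ))) :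
    cmLaw n ν S = ∫⁻ x, uniformMatching (parityFix n x)
      {σ | (parityFix n x, cmEdges (parityFix n x) σ) ∈ S} ∂(PP ν n) := by
  have hS : MeasurableSet S := (Set.to_countable S).measurableSet
  unfold cmLaw iidLaw
  rw [Measure.bind_apply hS (measurable_of_countable _).aemeasurable,
    lintegral_map (measurable_of_countable _) (measurable_of_countable _)]
  refine lintegral_congr fun x => ?_
  rw [Measure.map_apply measurable_from_top hS]
  rfl

end Prob

section Final

lemma pointwise_bound {n : ℕ} (x : Fin n → ℕ) (hx : ∀ i, 1 ≤ x i) (k : ℕ) (hk : 1 ≤ k)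
    (s : ℝ) (hs1 : 1 ≤ s) (hs2 : s ≤ 2) (c M b T : ℝ) (hM : 0 ≤ M) (hb : 0 < b)
    (hn : 6 ≤ n) (h1 : c * n / 2 ≤ c * n - 1 - b) (hc : 0 < c)
    (h2 : 3 * M * b / (c * n / 2) ≤ T) :
    uniformMatching (parityFix n x)
      {σ | (parityFix n x, cmEdges (parityFix n x) σ) ∈
        {p : (Fin n → ℕ) × (Fin n → Fin n → ℕ) |
            T < |ANND (eraseDeg p.2) (erase p.2) k - ANND p.1 p.2 k|}}
      ≤ Set.indicator {x : Fin n → ℕ | ∃ i, M < 2 * (x i : ℝ)} 1 x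
        + Set.indicator {x : Fin n → ℕ | Nk x k ≤ c * n} 1 x
        + ENNReal.ofReal (erBound (parityFix n x) s / b) := by
  by_cases hA : x ∈ {x : Fin n → ℕ | ∃ i, M < 2 * (x i : ℝ)}
  · rw [Set.indicator_of_mem hA]
    refine (uniform_le_one _ _).trans ?_
    rw [Pi.one_apply, add_assoc]
    exact le_self_add
  by_cases hB : x ∈ {x : Fin n → ℕ | Nk x k ≤ c * n}
  · rw [Set.indicator_of_mem hB]
    refine (uniform_le_one _ _).trans ?_
    rw [Pi.one_apply, add_comm _ (1 : ℝ≥0∞), add_assoc]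
    exact le_self_add
  rw [Set.indicator_of_notMem hA, Set.indicator_of_notMem hB, zero_add, zero_add]
  have hA' : ∀ i, 2 * (x i : ℝ) ≤ M := by
    intro i
    by_contra hcon
    exact hA ⟨i, not_le.mp hcon⟩
  have hB' : c * n < Nk x k := not_le.mp hB
  set d := parityFix n x with hd
  have hdM : ∀ i, (d i : ℝ) ≤ M := by
    intro i
    refine le_trans ?_ (hA' i)
    exact_mod_cast parityFix_le x hx i
  have hL := le_degSum_parityFix x hx
  refine le_trans (measure_mono ?_) (markov d b (erBound d s) hb
    (fun σ => ∑ i, er (cmEdges d σ) i) (sum_er_le d s hs1 hs2 hn hL))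
  intro σ hσ
  have hσ' : T < |ANND (eraseDeg (cmEdges d σ)) (erase (cmEdges d σ)) k
    - ANND d (cmEdges d σ) k| := hσ
  change b < ((∑ i, er (cmEdges d σ) i : ℕ) : ℝ)
  by_contra hcon
  have hE := not_lt.mp hcon
  have hrow := cm_row d σ
  have hcol := cm_col d σ
  have hN1 := Nk_parityFix x k
  rw [← hd] at hN1
  have hN2 := Nk_diff d (cmEdges d σ) hrow k
  have hN3 := (abs_le.mp hN2).1
  have hnR : (0:ℝ) < n := by exact_mod_cast (by omega : 0 < n)
  have hcn : 0 < c * n / 2 := by positivity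
  have hNe : c * n / 2 ≤ Nk (eraseDeg (cmEdges d σ)) k := by linarith
  have hdiff := ANND_diff d (cmEdges d σ) hrow hcol M hM hdM k hk (by linarith) (by linarith)
  have : 3 * M * ((∑ i, er (cmEdges d σ) i : ℕ) : ℝ) / Nk (eraseDeg (cmEdges d σ)) k
      ≤ 3 * M * b / (c * n / 2) := by
    gcongr
  linarith

lemma tendsto_rpow_neg_nat (C e : ℝ) (he : e < 0) :
    Tendsto (fun n : ℕ => ENNReal.ofReal (C * (n:ℝ) ^ e)) atTop (nhds 0) := by
  have h1 : Tendsto (fun n : ℕ => (n:ℝ) ^ e) atTop (nhds 0) := by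
    have := (tendsto_rpow_neg_atTop (y := -e) (by linarith)).comp tendsto_natCast_atTop_atTop
    simpa [Function.comp_def] using this
  have h2 := ENNReal.tendsto_ofReal (h1.const_mul C)
  simpa using h2

end Final

/-- For `𝒟` regularly varying with exponent `1 < γ < 2`, the difference
between the ANND in the erased configuration model and in the configuration model
satisfies `P(|Φ̂_n(k) − Φ_n(k)| > n^{2/γ − 1 − a}) → 0`, where `a = (γ−1)²/(2γ)` and
`k` is such that `f^*(k) > 0`. -/
theorem stmt7 (ν : Measure ℕ) [IsProbabilityMeasure ν] (f : ℕ → ℝ)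
    (hf : ∀ k, f k = (ν {k}).toReal) (hzero : ν {0} = 0)
    (γ : ℝ) (hγ1 : 1 < γ) (hγ2 : γ < 2)
    (l : ℝ → ℝ) (hsv : SlowlyVarying l) (hmono : EventuallyMonotone l)
    (hreg : ∀ k : ℕ, 1 ≤ k → f k = l k * (k : ℝ) ^ (-γ - 1))
    (a : ℝ) (ha : a = (γ - 1) ^ 2 / (2 * γ))
    (k : ℕ) (hk : 0 < sizeBiased f k) :
    Tendsto (fun n : ℕ =>
        ((cmLaw n ν) {p : (Fin n → ℕ) × (Fin n → Fin n → ℕ) |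
            (n : ℝ) ^ (2 / γ - 1 - a) <
              |ANND (eraseDeg p.2) (erase p.2) k - ANND p.1 p.2 k|}).toReal)
      atTop (nhds 0) := by
  have hf0 : ∀ k, 0 ≤ f k := fun k => by rw [hf]; exact ENNReal.toReal_nonneg
  have hne : (k : ℝ) * f k ≠ 0 := by
    intro h
    unfold sizeBiased at hk
    rw [h, zero_div] at hk
    exact lt_irrefl _ hk
  have hk1 : 1 ≤ k := by
    rcases Nat.eq_zero_or_pos k with h | h
    · subst h; simp at hne
    · exact h
  have hνk : 0 < ν {k} := by
    rw [pos_iff_ne_zero]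
    intro h
    apply hne
    rw [hf, h]; simp
  have ha0 : 0 < a := by
    rw [ha]
    have : 0 < γ - 1 := by linarith
    positivity
  have ha1 : a ≤ (γ - 1) / 2 := by
    rw [ha, div_le_div_iff₀ (by linarith) (by norm_num)]
    nlinarith
  obtain ⟨δ, hδ⟩ : ∃ δ, δ = a / 4 := ⟨_, rfl⟩
  have hδ0 : 0 < δ := by linarith
  obtain ⟨s, hs⟩ : ∃ s, s = γ - δ := ⟨_, rfl⟩
  obtain ⟨α, hα⟩ : ∃ α, α = 1 / γ + δ := ⟨_, rfl⟩
  obtain ⟨β, hβ⟩ : ∃ β, β = 2 - s + δ := ⟨_, rfl⟩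
  have hs1 : 1 ≤ s := by linarith
  have hs2 : s ≤ 2 := by linarith
  have hβ1 : β < 1 := by linarith
  have hαs : 1 - α * s < 0 := by
    rw [hα, hs]
    have e : 1 - (1 / γ + δ) * (γ - δ) = -(δ * (γ - 1 / γ - δ)) := by
      field_simp
      ring
    rw [e]
    have h1 : 1 / γ < 1 := by rw [div_lt_one (by linarith)]; exact hγ1
    have : 0 < γ - 1 / γ - δ := by
      linarith
    have := mul_pos hδ0 this
    linarith
  have hτ : α + β - 1 < 2 / γ - 1 - a := by
    have e : 2 / γ - 1 - a = 1 / γ + 1 - γ + a := by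
      rw [ha]; field_simp; ring
    rw [e, hα, hβ, hs]
    linarith
  have hm := moment_lt_top ν f hf γ l hsv hmono hreg s (by linarith) (by linarith)
  obtain ⟨c, hc0, hc⟩ := tail_Nk ν k hνk
  set m := ∫⁻ y, ENNReal.ofReal ((y:ℝ) ^ s) ∂ν with hmdef
  -- eventual inequalities
  have ev1 : ∀ᶠ n : ℕ in atTop, c * n / 2 ≤ c * n - 1 - (n:ℝ) ^ β := by
    have t1 : Tendsto (fun n : ℕ => (n:ℝ) ^ (β - 1)) atTop (nhds 0) := by
      have := (tendsto_rpow_neg_atTop (y := 1 - β) (by linarith)).comp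
        (tendsto_natCast_atTop_atTop (R := ℝ))
      simpa [Function.comp_def] using this
    have t2 : Tendsto (fun n : ℕ => ((n:ℝ))⁻¹) atTop (nhds 0) :=
      tendsto_inv_atTop_zero.comp tendsto_natCast_atTop_atTop
    have t3 := t1.add t2
    rw [add_zero] at t3
    filter_upwards [t3.eventually (gt_mem_nhds (show (0:ℝ) < c / 2 by linarith)),
      eventually_ge_atTop 1] with n hn hn1
    have hn0 : (0:ℝ) < n := by exact_mod_cast hn1
    have h1 : (n:ℝ) ^ β = n * (n:ℝ) ^ (β - 1) := by
      nth_rewrite 2 [← Real.rpow_one (n:ℝ)]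
      rw [← Real.rpow_add hn0]; ring_nf
    have h2 : (n:ℝ) * (n:ℝ)⁻¹ = 1 := mul_inv_cancel₀ hn0.ne'
    have h3 := mul_lt_mul_of_pos_left hn hn0
    rw [h1]
    nlinarith
  have ev2 : ∀ᶠ n : ℕ in atTop,
      3 * (n:ℝ) ^ α * (n:ℝ) ^ β / (c * n / 2) ≤ (n:ℝ) ^ (2 / γ - 1 - a) := by
    have t1 : Tendsto (fun n : ℕ => (n:ℝ) ^ (α + β - 1 - (2 / γ - 1 - a))) atTop (nhds 0) := by
      have := (tendsto_rpow_neg_atTop (y := -(α + β - 1 - (2 / γ - 1 - a))) (by linarith)).comp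
        (tendsto_natCast_atTop_atTop (R := ℝ))
      simpa only [neg_neg, Function.comp_def] using this
    filter_upwards [t1.eventually (gt_mem_nhds (show (0:ℝ) < c / 6 by linarith)),
      eventually_ge_atTop 1] with n hn hn1
    have hn0 : (0:ℝ) < n := by exact_mod_cast hn1
    rw [Real.rpow_sub hn0, div_lt_iff₀ (Real.rpow_pos_of_pos hn0 _), Real.rpow_sub_one hn0.ne',
      Real.rpow_add hn0, div_lt_iff₀ hn0] at hn
    rw [div_le_iff₀ (by positivity)]
    linarith
  have hbound : ∀ᶠ n : ℕ in atTop, (cmLaw n ν) {p : (Fin n → ℕ) × (Fin n → Fin n → ℕ) |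
            (n : ℝ) ^ (2 / γ - 1 - a) <
              |ANND (eraseDeg p.2) (erase p.2) k - ANND p.1 p.2 k|} ≤
      ENNReal.ofReal (m.toReal * 2 ^ s * (n:ℝ) ^ (1 - α * s)) + PP ν n {x | Nk x k ≤ c * n}
        + ENNReal.ofReal ((2 * (2 ^ s * m.toReal) + 4 * (2 ^ s * m.toReal) ^ 2)
          * (n:ℝ) ^ (-δ)) := by
    filter_upwards [ev1, ev2, eventually_ge_atTop 6] with n h1 h2 hn
    have hn0 : (0:ℝ) < n := by exact_mod_cast (by omega : 0 < n)
    rw [cmLaw_apply]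
    have hpt := (ae_pos ν hzero n).mono fun x hx =>
      pointwise_bound x hx k hk1 s hs1 hs2 c ((n:ℝ) ^ α) ((n:ℝ) ^ β)
        ((n:ℝ) ^ (2 / γ - 1 - a)) (by positivity) (by positivity) hn h1 hc0 h2
    refine (lintegral_mono_ae hpt).trans ?_
    rw [lintegral_add_left (measurable_of_countable _), lintegral_add_left (measurable_of_countable _),
      lintegral_indicator_one (Set.to_countable _).measurableSet,
      lintegral_indicator_one (Set.to_countable _).measurableSet]
    refine add_le_add (add_le_add ?_ le_rfl) ?_
    · refine (tail_max ν s (by linarith) n ((n:ℝ) ^ α) (by positivity)).trans (le_of_eq ?_)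
      rw [← hmdef]
      have hmr : m = ENNReal.ofReal m.toReal := (ENNReal.ofReal_toReal hm.ne).symm
      nth_rewrite 1 [hmr]
      rw [← ENNReal.ofReal_div_of_pos (by positivity), ← ENNReal.ofReal_natCast,
        ← ENNReal.ofReal_mul hn0.le]
      congr 1
      rw [Real.div_rpow (by positivity) (by norm_num), ← Real.rpow_mul hn0.le,
        Real.rpow_sub hn0, Real.rpow_one]
      field_simp
    · refine (lint_erBound ν hzero s (by linarith) hm n (by omega) ((n:ℝ) ^ β)
        (by positivity)).trans (le_of_eq ?_)
      congr 1
      rw [← hmdef, mul_div_assoc, ← Real.rpow_sub hn0, hβ]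
      ring_nf
  have hlim : Tendsto (fun n : ℕ => ENNReal.ofReal (m.toReal * 2 ^ s * (n:ℝ) ^ (1 - α * s))
      + PP ν n {x | Nk x k ≤ c * n}
        + ENNReal.ofReal ((2 * (2 ^ s * m.toReal) + 4 * (2 ^ s * m.toReal) ^ 2)
          * (n:ℝ) ^ (-δ))) atTop (nhds 0) := by
    have := ((tendsto_rpow_neg_nat (m.toReal * 2 ^ s) (1 - α * s) hαs).add hc).add
      (tendsto_rpow_neg_nat (2 * (2 ^ s * m.toReal) + 4 * (2 ^ s * m.toReal) ^ 2) (-δ)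
        (by linarith))
    simpa using this
  have hfin := tendsto_of_tendsto_of_tendsto_of_le_of_le' tendsto_const_nhds hlim
    (Eventually.of_forall fun _ => zero_le) hbound
  have := (ENNReal.tendsto_toReal ENNReal.zero_ne_top).comp hfin
  simpa [Function.comp_def] using this

end ANNDPaper
end
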